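/- arXiv:2410.08859 — 2 statements merged into one kernel-verified Lean document; each statement's English description precedes it below -/
import Mathlib

section
/- Let X and Y be nonempty finite sets, μ, ν strictly positive weight functions on X and Y, c a cost, ε > 0, and φ₁, φ₂ entropy functions satisfying Assumption A. Let 𝒥_A and 𝒥_B be two partitions of X into nonempty subsets, and let π⁰ be a nonnegative plan with E(π⁰) < ∞. Define the sequential domain decomposition iterates (π^k)_{k≥1} by: for odd k use partition 𝒥_A and for even k use 𝒥_B, and in one iteration cycle through the cells X_J of the chosen partition in a fixed order, each time replacing the restriction of the current plan to X_J × Y by the unique minimizer of the cell subproblem E_J(·| ν_{-J}), where ν_{-J}(y) := Σ_{x ∉ X_J} π(x,y) is computed from the current (already partially updated) plan π. Then the sequence (π^k)_k converges (pointwise on X × Y) to the unique global minimizer of E(π) := Σ_{x,y} c(x,y)π(x,y) + ε·KL(π | μ ⊗ ν) + D_{φ₁}(P_X π | μ) + D_{φ₂}(P_Y π | ν). -/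
open Filter Topology
open scoped Classical

noncomputable section

/-- `φ : ℝ → ℝ ∪ {+∞}` is an entropy function: lower semicontinuous, convex,
`dom(φ) ⊆ [0,∞)`, `dom(φ)\{0} ≠ ∅`, never taking the value `-∞`. -/
def IsEntropyFn (φ : ℝ → EReal) : Prop :=
  LowerSemicontinuous φ ∧
  (∀ x y a b : ℝ, 0 ≤ a → 0 ≤ b → a + b = 1 →
      φ (a * x + b * y) ≤ (a : EReal) * φ x + (b : EReal) * φ y) ∧
  (∀ x : ℝ, φ x ≠ ⊥) ∧
  (∀ x : ℝ, φ x < ⊤ → 0 ≤ x) ∧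
  (∃ x : ℝ, x ≠ 0 ∧ φ x < ⊤)

/-- The recession slope `φ'_∞ = lim_{x→∞} φ(x)/x`. -/
def recessionSlope (φ : ℝ → EReal) : EReal :=
  Filter.limsup (fun x : ℝ => φ x * ((x⁻¹ : ℝ) : EReal)) Filter.atTop

/-- The `φ`-divergence on a finite set `Z`:
`D_φ(ρ|σ) = ∑_{z : σ z > 0} σ z · φ(ρ z / σ z) + φ'_∞ · ∑_{z : σ z = 0} ρ z`. -/
def divergence {Z : Type*} [Fintype Z] (φ : ℝ → EReal) (ρ σ : Z → ℝ) : EReal :=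
  (∑ z, if 0 < σ z then (σ z : EReal) * φ (ρ z / σ z) else 0)
    + recessionSlope φ * ((∑ z, if σ z = 0 then ρ z else 0 : ℝ) : EReal)

/-- The convex conjugate `φ*(z) = sup_{x ∈ ℝ} (z·x − φ(x))`. -/
def conjFn (φ : ℝ → EReal) (z : ℝ) : EReal :=
  ⨆ x : ℝ, (((z * x : ℝ) : EReal) - φ x)

/-- Kullback–Leibler divergence on a finite set, with `0·log 0 = 0`:
`KL(ρ|σ) = ∑ z (ρ z log(ρ z/σ z) − ρ z + σ z)` if `ρ ≪ σ`, else `+∞`. -/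
def KLfin {Z : Type*} [Fintype Z] (ρ σ : Z → ℝ) : EReal :=
  if ∀ z, σ z = 0 → ρ z = 0 then
    ((∑ z, (ρ z * Real.log (ρ z / σ z) - ρ z + σ z) : ℝ) : EReal)
  else ⊤

/-- Assumption A: the entropy function `φ` is nonnegative, finite on `[0,∞)`,
and continuously differentiable on the interior `(0,∞)` of its domain. -/
def AssumptionA (φ : ℝ → EReal) : Prop :=
  IsEntropyFn φ ∧ (∀ x : ℝ, 0 ≤ φ x) ∧ (∀ x : ℝ, 0 ≤ x → φ x ≠ ⊤) ∧
  ContDiffOn ℝ 1 (fun s : ℝ => (φ s).toReal) (Set.Ioi (0 : ℝ))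

/-- Primal objective of the unbalanced (cell) problem with `Y`-submarginal `νm`:
`E_J(π|νm) = ⟨c, π⟩ + ε KL(π | μ⊗ν) + D_{φ₁}(P_X π | μ) + D_{φ₂}(P_Y π + νm | ν)`. -/
def EJfun {W Y : Type*} [Fintype W] [Fintype Y]
    (c : W → Y → ℝ) (ε : ℝ) (φ₁ φ₂ : ℝ → EReal)
    (μ : W → ℝ) (ν : Y → ℝ) (νm : Y → ℝ) (π : W → Y → ℝ) : EReal :=
  ((∑ x, ∑ y, c x y * π x y : ℝ) : EReal)
    + (ε : EReal) * KLfin (fun p : W × Y => π p.1 p.2) (fun p : W × Y => μ p.1 * ν p.2)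
    + divergence φ₁ (fun x => ∑ y, π x y) μ
    + divergence φ₂ (fun y => (∑ x, π x y) + νm y) ν

/-- Dual objective of the unbalanced (cell) problem with `Y`-submarginal `νm`. -/
def DJfun {W Y : Type*} [Fintype W] [Fintype Y]
    (c : W → Y → ℝ) (ε : ℝ) (φ₁ φ₂ : ℝ → EReal)
    (μ : W → ℝ) (ν : Y → ℝ) (νm : Y → ℝ) (α : W → ℝ) (β : Y → ℝ) : EReal :=
  ((ε * ∑ x, ∑ y, (1 - Real.exp ((α x + β y - c x y) / ε)) * (μ x * ν y) : ℝ) : EReal)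
    - (∑ x, (μ x : EReal) * conjFn φ₁ (-(α x)))
    - (∑ y, (ν y : EReal) * conjFn φ₂ (-(β y)))
    - ((∑ y, β y * νm y : ℝ) : EReal)

/-- The `Y`-submarginal `ν_{-J}` of the plan `π` outside the cell `J`:
`ν_{-J}(y) = ∑_{x ∉ J} π(x,y)`. -/
def outMarg {X Y : Type*} [Fintype X] (J : Set X) (π : X → Y → ℝ) : Y → ℝ :=
  fun y => ∑ x, (Jᶜ).indicator (fun x' => π x' y) x

/-- The global unbalanced objective
`E(π) = ⟨c, π⟩ + ε KL(π|μ⊗ν) + D_{φ₁}(P_X π|μ) + D_{φ₂}(P_Y π|ν)`. -/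
def Eglobal {X Y : Type*} [Fintype X] [Fintype Y]
    (c : X → Y → ℝ) (ε : ℝ) (φ₁ φ₂ : ℝ → EReal)
    (μ : X → ℝ) (ν : Y → ℝ) (π : X → Y → ℝ) : EReal :=
  EJfun c ε φ₁ φ₂ μ ν (fun _ => 0) π

/-- An indexed family `Js : Fin n → Set X` is a partition of `X` into nonempty
subsets. -/
def IsFinPartition {X : Type*} {n : ℕ} (Js : Fin n → Set X) : Prop :=
  (∀ i, (Js i).Nonempty) ∧ (⋃ i, Js i) = Set.univ ∧
    ∀ i j, i ≠ j → Disjoint (Js i) (Js j)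

/-- `update` implements one cell update: `update J π` agrees with `π` outside
`J × Y` and its restriction to `J × Y` is the (unique) minimizer of the cell
subproblem `E_J(·|ν_{-J})` with `ν_{-J}(y) = ∑_{x ∉ J} π(x,y)`. -/
def IsCellUpdate {X Y : Type*} [Fintype X] [Fintype Y]
    (c : X → Y → ℝ) (ε : ℝ) (φ₁ φ₂ : ℝ → EReal) (μ : X → ℝ) (ν : Y → ℝ)
    (update : Set X → (X → Y → ℝ) → (X → Y → ℝ)) : Prop :=
  ∀ (J : Set X) (π : X → Y → ℝ), (∀ x y, 0 ≤ π x y) →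
    (∀ x y, 0 ≤ update J π x y) ∧
    (∀ x, x ∉ J → ∀ y, update J π x y = π x y) ∧
    ∀ π' : ↥J → Y → ℝ, (∀ (j : J) (y : Y), 0 ≤ π' j y) →
      EJfun (fun (j : J) y => c j y) ε φ₁ φ₂ (fun (j : J) => μ j) ν (outMarg J π)
          (fun (j : J) y => update J π j y)
        ≤ EJfun (fun (j : J) y => c j y) ε φ₁ φ₂ (fun (j : J) => μ j) ν (outMarg J π) π'

/-- One sequential domain decomposition sweep: cycle through the cells of the
partition in their fixed order, updating the current plan after each cell. -/
def sweep {X Y : Type*} (update : Set X → (X → Y → ℝ) → (X → Y → ℝ))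
    {n : ℕ} (Js : Fin n → Set X) (π : X → Y → ℝ) : X → Y → ℝ :=
  (List.ofFn Js).foldl (fun p J => update J p) π

/-!
On nonnegative plans the objective is strictly convex, continuous and coercive, and no cell update
increases it, so along the iterates it decreases to a limit. Take a limit point `p` along the
iterations that sweep the cells of a fixed cover. Within such a sweep the objective stays
asymptotically constant, and strict convexity of the cell problems forces every intermediate plan
to the same limit `p`; hence `p` minimizes the objective on every cell of the cover. Because the
entropy has slope `-∞` at `0`, all entries of `p` are positive, so the objective is differentiable
at `p`. Cellwise optimality kills all its partial derivatives, and convexity turns `p` into the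
global minimizer. Every limit point of the whole sequence has the same value as `p`, hence equals
`p` by strict convexity.
-/

section CellMinimization

variable {V X E α : Type*}

lemma tendsto_atTop_of_antitone_of_tendsto {f : ℕ → ℝ} (hf : Antitone f) {l : Filter ℕ} [l.NeBot]
    (hl : l ≤ atTop) {c : ℝ} (hc : Tendsto f l (𝓝 c)) : Tendsto f atTop (𝓝 c) := by
  rcases tendsto_atTop_of_antitone hf with hbot | ⟨c', hc'⟩
  · exact absurd hc (not_tendsto_nhds_of_tendsto_atBot (hbot.mono_left hl) c)
  · rwa [tendsto_nhds_unique hc (hc'.mono_left hl)]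

lemma tendsto_comp_of_continuousOn [TopologicalSpace V] {F : V → ℝ} {D : Set V}
    (hF : ContinuousOn F D) {l : Filter α} {a : α → V} {p : V} (ha : ∀ n, a n ∈ D) (hp : p ∈ D)
    (hap : Tendsto a l (𝓝 p)) : Tendsto (F ∘ a) l (𝓝 (F p)) :=
  (hF p hp).tendsto.comp (tendsto_nhdsWithin_iff.2 ⟨hap, .of_forall ha⟩)

lemma tendsto_of_unique_limit_of_isCompact_sublevel [TopologicalSpace V] {F : V → ℝ} {D : Set V}
    (hF : ContinuousOn F D) (hK : ∀ c, IsCompact {r ∈ D | F r ≤ c})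
    {l : Filter α} {b : α → V} {p : V} {c : ℝ} (hb : ∀ n, b n ∈ D) (hFb : Tendsto (F ∘ b) l (𝓝 c))
    (huniq : ∀ q ∈ D, F q = c → ∀ U : Ultrafilter α, U ≤ l → Tendsto b U (𝓝 q) → q = p) :
    Tendsto b l (𝓝 p) := by
  have hbdd : ∀ᶠ n in l, b n ∈ {r ∈ D | F r ≤ c + 1} :=
    (hFb.eventually_le_const (lt_add_one c)).mono fun n hn => ⟨hb n, hn⟩
  refine (hK (c + 1)).tendsto_nhds_of_unique_mapClusterPt hbdd fun q hq hbq => ?_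
  obtain ⟨U, hU, hbU⟩ := mapClusterPt_iff_ultrafilter.1 hbq
  have hFq := tendsto_comp_of_continuousOn hF hb hq.1 hbU
  exact huniq q hq.1 (tendsto_nhds_unique hFq (hFb.mono_left hU)) U hU hbU

/-- The feasible set of the cell subproblem at `π`: the points of the domain `D` that agree with
`π` outside the cell `J`. -/
def cellSlice (D : Set (X → E)) (J : Set X) (π : X → E) : Set (X → E) :=
  {r ∈ D | Set.EqOn r π Jᶜ}

/-- `p` solves the subproblem of the cell `J` at `π`: it minimizes `F` over the points of `D` that
agree with `π` outside `J`. -/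
def IsCellMin (F : (X → E) → ℝ) (D : Set (X → E)) (J : Set X) (π p : X → E) : Prop :=
  p ∈ cellSlice D J π ∧ IsMinOn F (cellSlice D J π) p

/-- `update J` replaces every point of `D` by a solution of its subproblem on the cell `J`. -/
def IsCellMinMap (F : (X → E) → ℝ) (D : Set (X → E)) (update : Set X → (X → E) → X → E) : Prop :=
  ∀ J, ∀ π ∈ D, IsCellMin F D J π (update J π)

lemma convex_cellSlice [AddCommGroup E] [Module ℝ E] {D : Set (X → E)} (hD : Convex ℝ D)
    (J : Set X) (π : X → E) : Convex ℝ (cellSlice D J π) := by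
  refine fun p hp q hq a b ha hb hab => ⟨hD hp.1 hq.1 ha hb hab, fun x hx => ?_⟩
  simp only [Pi.add_apply, Pi.smul_apply, hp.2 hx, hq.2 hx, ← add_smul, hab, one_smul]

lemma IsCellMin.of_tendsto [TopologicalSpace E] [T2Space E] {F : (X → E) → ℝ} {C : X → Set E}
    (hF : ContinuousOn F (Set.univ.pi C)) {l : Filter α} [l.NeBot] {J : Set X}
    {a b : α → X → E} {p q : X → E} (ha : ∀ n, a n ∈ Set.univ.pi C)
    (hb : ∀ n, IsCellMin F (Set.univ.pi C) J (a n) (b n)) (hq : q ∈ Set.univ.pi C)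
    (hap : Tendsto a l (𝓝 p)) (hbq : Tendsto b l (𝓝 q)) :
    IsCellMin F (Set.univ.pi C) J p q := by
  rw [tendsto_pi_nhds] at hap
  refine ⟨⟨hq, fun x hx => ?_⟩, fun r hr => ?_⟩
  · have hbx : Tendsto (fun n => b n x) l (𝓝 (p x)) :=
      (hap x).congr fun n => ((hb n).1.2 hx).symm
    exact tendsto_nhds_unique (tendsto_pi_nhds.1 hbq x) hbx
  -- Competitors of `a n` that converge to the competitor `r` of `p`.
  · let R : α → X → E := fun n => J.piecewise r (a n)
    have hRmem : ∀ n, R n ∈ Set.univ.pi C := fun n => Set.piecewise_mem_pi J hr.1 (ha n)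
    have hR : Tendsto R l (𝓝 r) := by
      refine tendsto_pi_nhds.2 fun x => ?_
      by_cases hx : x ∈ J
      · simp only [R, Set.piecewise_eq_of_mem _ _ _ hx, tendsto_const_nhds]
      · simpa only [R, Set.piecewise_eq_of_notMem _ _ _ hx, hr.2 hx] using hap x
    exact le_of_tendsto_of_tendsto' (tendsto_comp_of_continuousOn hF (fun n => (hb n).1.1) hq hbq)
      (tendsto_comp_of_continuousOn hF hRmem hr.1 hR) fun n =>
        (hb n).2 ⟨hRmem n, fun x hx => Set.piecewise_eq_of_notMem _ _ _ hx⟩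

lemma IsCellMin.eq_of_apply_eq [AddCommGroup E] [Module ℝ E] {F : (X → E) → ℝ} {D : Set (X → E)}
    (hF : StrictConvexOn ℝ D F) {J : Set X} {p q : X → E} (hp : p ∈ D) (hq : IsCellMin F D J p q)
    (hFq : F q = F p) : q = p := by
  have hpmem : p ∈ cellSlice D J p := ⟨hp, Set.eqOn_refl p _⟩
  have hpmin : IsMinOn F (cellSlice D J p) p := fun r hr => hFq.symm.trans_le (hq.2 hr)
  exact (hF.subset (Set.sep_subset _ _) (convex_cellSlice hF.1 J p)).eq_of_isMinOn
    hq.2 hpmin hq.1 hpmem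

namespace IsCellMinMap

variable {F : (X → E) → ℝ} {update : Set X → (X → E) → X → E}

lemma foldl_mem {D : Set (X → E)} (hu : IsCellMinMap F D update) (A : List (Set X)) {π : X → E}
    (hπ : π ∈ D) : A.foldl (fun q J => update J q) π ∈ D := by
  induction A generalizing π with
  | nil => exact hπ
  | cons J _ ih => exact ih (hu J π hπ).1.1

lemma apply_le {D : Set (X → E)} (hu : IsCellMinMap F D update) (J : Set X) {π : X → E}
    (hπ : π ∈ D) : F (update J π) ≤ F π :=
  (hu J π hπ).2 ⟨hπ, Set.eqOn_refl π _⟩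

lemma apply_foldl_le {D : Set (X → E)} (hu : IsCellMinMap F D update) (A : List (Set X))
    {π : X → E} (hπ : π ∈ D) : F (A.foldl (fun q J => update J q) π) ≤ F π := by
  induction A generalizing π with
  | nil => exact le_rfl
  | cons J A ih => exact (ih (hu J π hπ).1.1).trans (hu.apply_le J hπ)

variable [AddCommGroup E] [Module ℝ E] [TopologicalSpace E] [T2Space E] {C : X → Set E}

lemma isCellMin_of_tendsto_foldl (hu : IsCellMinMap F (Set.univ.pi C) update)
    (hF : StrictConvexOn ℝ (Set.univ.pi C) F) (hFc : ContinuousOn F (Set.univ.pi C))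
    (hK : ∀ c, IsCompact {r ∈ Set.univ.pi C | F r ≤ c}) {l : Filter α} [l.NeBot]
    (A : List (Set X)) {a : α → X → E} {p : X → E} (ha : ∀ n, a n ∈ Set.univ.pi C)
    (hp : p ∈ Set.univ.pi C) (hap : Tendsto a l (𝓝 p))
    (hFA : Tendsto (fun n => F (A.foldl (fun q J => update J q) (a n))) l (𝓝 (F p))) :
    ∀ J ∈ A, IsCellMin F (Set.univ.pi C) J p p := by
  induction A generalizing a with
  | nil => exact fun J hJ => absurd hJ List.not_mem_nil
  | cons J A ih =>
    have hb n : IsCellMin F (Set.univ.pi C) J (a n) (update J (a n)) := hu J _ (ha n)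
    have hbmem n : update J (a n) ∈ Set.univ.pi C := (hb n).1.1
    have hFb : Tendsto (fun n => F (update J (a n))) l (𝓝 (F p)) :=
      tendsto_of_tendsto_of_tendsto_of_le_of_le hFA (tendsto_comp_of_continuousOn hFc ha hp hap)
        (fun n => hu.apply_foldl_le A (hbmem n)) fun n => hu.apply_le J (ha n)
    have hbp : Tendsto (fun n => update J (a n)) l (𝓝 p) :=
      tendsto_of_unique_limit_of_isCompact_sublevel hFc hK hbmem hFb
        fun q hq hFq U hU hbq => IsCellMin.eq_of_apply_eq hF hp
          (.of_tendsto hFc ha hb hq (hap.mono_left hU) hbq) hFq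
    exact List.forall_mem_cons.2 ⟨.of_tendsto hFc ha hb hp hap hbp, ih hbmem hbp hFA⟩

theorem exists_isMinOn_and_tendsto (hu : IsCellMinMap F (Set.univ.pi C) update)
    (hF : StrictConvexOn ℝ (Set.univ.pi C) F) (hFc : ContinuousOn F (Set.univ.pi C))
    (hK : ∀ c, IsCompact {r ∈ Set.univ.pi C | F r ≤ c}) {A : List (Set X)}
    (hA : ∀ p ∈ Set.univ.pi C, (∀ J ∈ A, IsCellMin F (Set.univ.pi C) J p p) →
      IsMinOn F (Set.univ.pi C) p)
    {L : ℕ → List (Set X)} (hL : ∃ᶠ n in atTop, L n = A) {a : ℕ → X → E}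
    (ha₀ : a 0 ∈ Set.univ.pi C)
    (ha : ∀ n, a (n + 1) = (L n).foldl (fun q J => update J q) (a n)) :
    ∃ p ∈ Set.univ.pi C, IsMinOn F (Set.univ.pi C) p ∧ Tendsto a atTop (𝓝 p) := by
  have hmem n : a n ∈ Set.univ.pi C := by
    induction n with
    | zero => exact ha₀
    | succ n ih => exact ha n ▸ hu.foldl_mem (L n) ih
  have hanti : Antitone (F ∘ a) := antitone_nat_of_succ_le fun n => by
    simpa only [Function.comp_apply, ha n] using hu.apply_foldl_le (L n) (hmem n)
  have : (atTop ⊓ 𝓟 {n | L n = A}).NeBot := frequently_mem_iff_neBot.1 hL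
  obtain ⟨p, ⟨hp, -⟩, hap⟩ := (hK (F (a 0))).exists_mapClusterPt
    (f := atTop ⊓ 𝓟 {n | L n = A}) (u := a)
    (le_principal_iff.2 (mem_map.2 (univ_mem' fun n => ⟨hmem n, hanti n.zero_le⟩)))
  obtain ⟨U, hU, hap⟩ := mapClusterPt_iff_ultrafilter.1 hap
  have hUtop : (U : Filter ℕ) ≤ atTop := hU.trans inf_le_left
  have hUA : ∀ᶠ n in (U : Filter ℕ), L n = A := hU (mem_inf_of_right (mem_principal_self _))
  have hFa : Tendsto (F ∘ a) atTop (𝓝 (F p)) := tendsto_atTop_of_antitone_of_tendsto hanti hUtop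
    (tendsto_comp_of_continuousOn hFc hmem hp hap)
  have hFA : Tendsto (fun n => F (A.foldl (fun q J => update J q) (a n))) U (𝓝 (F p)) :=
    ((hFa.comp (tendsto_add_atTop_nat 1)).mono_left hUtop).congr' <| hUA.mono fun n hn => by
      simp only [Function.comp_apply, ha n, hn]
  have hpmin := hA p hp (hu.isCellMin_of_tendsto_foldl hF hFc hK A hmem hp hap hFA)
  refine ⟨p, hp, hpmin, tendsto_of_unique_limit_of_isCompact_sublevel hFc hK hmem hFa
    fun q hq hFq _ _ _ => hF.eq_of_isMinOn (fun r hr => hFq.trans_le (hpmin hr)) hpmin hq hp⟩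

end IsCellMinMap

end CellMinimization

section Stationarity

lemma isMinOn_of_convexOn_of_hasFDerivAt_zero {V : Type*} [NormedAddCommGroup V] [NormedSpace ℝ V]
    {F : V → ℝ} {D : Set V} {p : V} (hF : ConvexOn ℝ D F) (hp : p ∈ D)
    (hFp : HasFDerivAt F (0 : V →L[ℝ] ℝ) p) : IsMinOn F D p := by
  intro r hr
  have hslope := (hFp.hasLineDerivAt (r - p)).tendsto_slope_zero_right
  refine sub_nonneg.1 (le_of_tendsto hslope ?_)
  filter_upwards [Ioo_mem_nhdsGT one_pos] with t ht
  have hchord := hF.2 hp hr (sub_nonneg.2 ht.2.le) ht.1.le (sub_add_cancel 1 t)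
  rw [show (1 - t) • p + t • r = p + t • (r - p) by module] at hchord
  rw [smul_eq_mul, inv_mul_le_iff₀ ht.1]
  simp only [smul_eq_mul] at hchord
  linarith

variable {X E : Type*} [Finite X] [NormedAddCommGroup E] [NormedSpace ℝ E]
  {F : (X → E) → ℝ} {D : Set (X → E)} {p : X → E}

lemma IsCellMin.hasFDerivAt_apply_single_eq_zero {J : Set X} (hJ : IsCellMin F D J p p)
    {L : (X → E) →L[ℝ] ℝ} (hL : HasFDerivAt F L p) (hD : D ∈ 𝓝 p) {x : X} (hx : x ∈ J) (v : E) :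
    L (Pi.single x v) = 0 := by
  cases nonempty_fintype X
  refine IsLocalMin.hasDerivAt_eq_zero (a := 0) ?_ (hL.hasLineDerivAt (Pi.single x v))
  have hline : Tendsto (fun t : ℝ => p + t • (Pi.single x v : X → E)) (𝓝 0) (𝓝 p) :=
    Continuous.tendsto' (by fun_prop) _ _ (by simp)
  filter_upwards [hline hD] with t ht
  simp only [zero_smul, add_zero]
  refine hJ.2 ⟨ht, fun z hz => ?_⟩
  have hzx : z ≠ x := fun h => hz (h ▸ hx)
  simp [hzx]

theorem isMinOn_of_forall_isCellMin (hF : ConvexOn ℝ D F) (hFp : DifferentiableAt ℝ F p)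
    (hD : D ∈ 𝓝 p) {A : List (Set X)} (hcover : ∀ x, ∃ J ∈ A, x ∈ J)
    (hA : ∀ J ∈ A, IsCellMin F D J p p) : IsMinOn F D p := by
  cases nonempty_fintype X
  have hzero : fderiv ℝ F p = 0 := by
    refine ContinuousLinearMap.coe_injective (LinearMap.pi_ext fun x v => ?_)
    obtain ⟨J, hJ, hx⟩ := hcover x
    exact (hA J hJ).hasFDerivAt_apply_single_eq_zero hFp.hasFDerivAt hD hx v
  exact isMinOn_of_convexOn_of_hasFDerivAt_zero hF (mem_of_mem_nhds hD)
    (hzero ▸ hFp.hasFDerivAt)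

end Stationarity

section ConvexOnHalfLine

variable {f : ℝ → ℝ}

lemma add_sub_le_of_convexOn (hf : ConvexOn ℝ (Set.Ici 0) f) {s t : ℝ} (hs : 0 ≤ s)
    (ht₀ : 0 ≤ t) (ht₁ : t ≤ 1) : f (s + t) - f s ≤ t * (f (s + 1) - f s) := by
  have hchord := hf.2 hs (add_nonneg hs zero_le_one : (0 : ℝ) ≤ s + 1) (sub_nonneg.2 ht₁) ht₀
    (sub_add_cancel 1 t)
  rw [smul_eq_mul, smul_eq_mul, show (1 - t) * s + t * (s + 1) = s + t by ring] at hchord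
  simp only [smul_eq_mul] at hchord
  linarith

-- Convexity bounds `f` near `0` from above by its chord, so only lower semicontinuity is missing.
lemma continuousOn_Ici_of_convexOn (hf : ConvexOn ℝ (Set.Ici 0) f)
    (hlsc : LowerSemicontinuousWithinAt f (Set.Ici 0) 0) : ContinuousOn f (Set.Ici 0) := by
  refine hf.continuousOn_Ici (continuousWithinAt_iff_lower_upperSemicontinuousWithinAt.2
    ⟨hlsc, fun y hy => ?_⟩)
  have hchord : Tendsto (fun t => f 0 + t * (f (0 + 1) - f 0)) (𝓝 0) (𝓝 (f 0)) :=
    Continuous.tendsto' (by fun_prop) _ _ (by simp)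
  filter_upwards [nhdsWithin_le_nhds (hchord.eventually_lt_const hy), self_mem_nhdsWithin,
    nhdsWithin_le_nhds (eventually_le_nhds one_pos)] with t ht ht₀ ht₁
  have hle := add_sub_le_of_convexOn hf le_rfl ht₀ ht₁
  rw [zero_add t] at hle
  linarith

end ConvexOnHalfLine

section MarginalEnergy

lemma strictConvexOn_pi_sum {ι : Type*} [Fintype ι] {E : ι → Type*} [∀ i, AddCommMonoid (E i)]
    [∀ i, Module ℝ (E i)] {s : ∀ i, Set (E i)} {f : ∀ i, E i → ℝ}
    (hf : ∀ i, StrictConvexOn ℝ (s i) (f i)) :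
    StrictConvexOn ℝ (Set.univ.pi s) (fun v => ∑ i, f i (v i)) := by
  refine ⟨convex_pi fun i _ => (hf i).1, fun v hv w hw hvw a b ha hb hab => ?_⟩
  obtain ⟨i, hi⟩ := Function.ne_iff.1 hvw
  simp only [smul_eq_mul, Finset.mul_sum, ← Finset.sum_add_distrib]
  exact Finset.sum_lt_sum
    (fun j _ => (hf j).convexOn.2 (hv j trivial) (hw j trivial) ha.le hb.le hab)
    ⟨i, Finset.mem_univ i, (hf i).2 (hv i trivial) (hw i trivial) hi ha hb hab⟩

lemma convexOn_finset_sum {ι V : Type*} [AddCommMonoid V] [Module ℝ V] {D : Set V}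
    (hD : Convex ℝ D) {f : ι → V → ℝ} (s : Finset ι) (hf : ∀ i ∈ s, ConvexOn ℝ D (f i)) :
    ConvexOn ℝ D (fun v => ∑ i ∈ s, f i v) := by
  refine ⟨hD, fun v hv w hw a b ha hb hab => ?_⟩
  simp only [smul_eq_mul, Finset.mul_sum, ← Finset.sum_add_distrib]
  exact Finset.sum_le_sum fun i hi => (hf i hi).2 hv hw ha hb hab

lemma sum_apply_add_single {ι E : Type*} [Fintype ι] [AddCommMonoid E] (f : ι → E → ℝ) (v : ι → E)
    (i : ι) (e : E) :
    ∑ j, f j ((v + Pi.single i e : ι → E) j) = ∑ j, f j (v j) + (f i (v i + e) - f i (v i)) := by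
  rw [← sub_eq_iff_eq_add', ← Finset.sum_sub_distrib, Fintype.sum_eq_single i]
  · simp
  · intro j hj
    simp [hj]

lemma outMarg_eq_sum_compl {X Y : Type*} [Fintype X] (J : Set X) (π : X → Y → ℝ) (y : Y) :
    outMarg J π y = ∑ x : ↥Jᶜ, π x y := by
  rw [outMarg, Finset.sum_indicator_eq_sum_filter]
  exact Finset.sum_subtype _ (by simp) _

variable {X Y : Type*} [Fintype X] [Fintype Y]

/-- The common shape of the global and the cell objectives: a separable cost `h` of the plan, a
separable cost `k` of its first marginal and a separable cost `l` of its second marginal. -/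
def marginalEnergy (h : X → Y → ℝ → ℝ) (k : X → ℝ → ℝ) (l : Y → ℝ → ℝ) (π : X → Y → ℝ) : ℝ :=
  ∑ x, (∑ y, h x y (π x y) + k x (∑ y, π x y)) + ∑ y, l y (∑ x, π x y)

variable {h : X → Y → ℝ → ℝ} {k : X → ℝ → ℝ} {l : Y → ℝ → ℝ}

lemma strictConvexOn_marginalEnergy (hh : ∀ x y, StrictConvexOn ℝ (Set.Ici 0) (h x y))
    (hk : ∀ x, ConvexOn ℝ (Set.Ici 0) (k x)) (hl : ∀ y, ConvexOn ℝ (Set.Ici 0) (l y)) :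
    StrictConvexOn ℝ (Set.Ici 0) (marginalEnergy h k l) := by
  have hrow x : StrictConvexOn ℝ (Set.Ici (0 : Y → ℝ))
      (fun v => ∑ y, h x y (v y) + k x (∑ y, v y)) := by
    refine StrictConvexOn.add_convexOn ?_ ?_
    · rw [← Set.pi_univ_Ici]
      exact strictConvexOn_pi_sum (hh x)
    · refine ⟨convex_Ici 0, fun v hv w hw a b ha hb hab => ?_⟩
      simpa [Finset.sum_add_distrib, Finset.mul_sum] using
        (hk x).2 (Finset.sum_nonneg fun y _ => hv y : 0 ≤ ∑ y, v y)
          (Finset.sum_nonneg fun y _ => hw y : 0 ≤ ∑ y, w y) ha hb hab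
  have hcol y : ConvexOn ℝ (Set.Ici (0 : X → Y → ℝ)) (fun π => l y (∑ x, π x y)) := by
    refine ⟨convex_Ici 0, fun v hv w hw a b ha hb hab => ?_⟩
    simpa [Finset.sum_add_distrib, Finset.mul_sum] using
      (hl y).2 (Finset.sum_nonneg fun x _ => hv x y : 0 ≤ ∑ x, v x y)
        (Finset.sum_nonneg fun x _ => hw x y : 0 ≤ ∑ x, w x y) ha hb hab
  refine StrictConvexOn.add_convexOn ?_ (convexOn_finset_sum (convex_Ici 0) _ fun y _ => hcol y)
  rw [← Set.pi_univ_Ici]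
  exact strictConvexOn_pi_sum hrow

lemma continuousOn_marginalEnergy (hh : ∀ x y, ContinuousOn (h x y) (Set.Ici 0))
    (hk : ∀ x, ContinuousOn (k x) (Set.Ici 0)) (hl : ∀ y, ContinuousOn (l y) (Set.Ici 0)) :
    ContinuousOn (marginalEnergy h k l) (Set.Ici 0) := by
  refine (continuousOn_finsetSum _ fun x _ => (continuousOn_finsetSum _ fun y _ => ?_).add ?_).add
    (continuousOn_finsetSum _ fun y _ => ?_)
  · exact (hh x y).comp (by fun_prop) fun π hπ => hπ x y
  · exact (hk x).comp (by fun_prop) fun π hπ => Finset.sum_nonneg fun y _ => hπ x y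
  · exact (hl y).comp (by fun_prop) fun π hπ => Finset.sum_nonneg fun x _ => hπ x y

lemma apply_le_marginalEnergy_add {K : X → Y → ℝ} (hh : ∀ x y, ∀ t ≥ 0, t ≤ h x y t + K x y)
    (hk : ∀ x, ∀ t ≥ 0, 0 ≤ k x t) (hl : ∀ y, ∀ t ≥ 0, 0 ≤ l y t) {π : X → Y → ℝ} (hπ : 0 ≤ π)
    (x : X) (y : Y) : π x y ≤ marginalEnergy h k l π + ∑ x, ∑ y, K x y := by
  have hrow x : 0 ≤ ∑ y, π x y := Finset.sum_nonneg fun y _ => hπ x y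
  have hcol y : 0 ≤ ∑ x, π x y := Finset.sum_nonneg fun x _ => hπ x y
  calc π x y ≤ ∑ y, π x y := Finset.single_le_sum (fun y _ => hπ x y) (Finset.mem_univ y)
    _ ≤ ∑ x, ∑ y, π x y := Finset.single_le_sum (fun x _ => hrow x) (Finset.mem_univ x)
    _ ≤ ∑ x, (∑ y, h x y (π x y) + k x (∑ y, π x y) + ∑ y, K x y) := by
      refine Finset.sum_le_sum fun x _ => ?_
      have : ∑ y, π x y ≤ ∑ y, h x y (π x y) + ∑ y, K x y := by
        simpa only [Finset.sum_add_distrib] using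
          Finset.sum_le_sum fun y (_ : y ∈ Finset.univ) => hh x y _ (hπ x y)
      linarith [hk x _ (hrow x)]
    _ ≤ marginalEnergy h k l π + ∑ x, ∑ y, K x y := by
      rw [marginalEnergy, Finset.sum_add_distrib]
      linarith [Finset.sum_nonneg fun y (_ : y ∈ Finset.univ) => hl y _ (hcol y)]

lemma isCompact_sublevel_marginalEnergy (hh : ∀ x y, ContinuousOn (h x y) (Set.Ici 0))
    (hk : ∀ x, ContinuousOn (k x) (Set.Ici 0)) (hl : ∀ y, ContinuousOn (l y) (Set.Ici 0))
    (hhK : ∀ x y, ∃ K, ∀ t ≥ 0, t ≤ h x y t + K) (hk₀ : ∀ x, ∀ t ≥ 0, 0 ≤ k x t)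
    (hl₀ : ∀ y, ∀ t ≥ 0, 0 ≤ l y t) (c : ℝ) :
    IsCompact {π ∈ Set.Ici (0 : X → Y → ℝ) | marginalEnergy h k l π ≤ c} := by
  choose K hK using hhK
  refine (isCompact_Icc (a := 0) (b := fun _ _ => c + ∑ x, ∑ y, K x y)).of_isClosed_subset
    ((continuousOn_marginalEnergy hh hk hl).preimage_isClosed_of_isClosed isClosed_Ici isClosed_Iic)
    fun π hπ => ⟨hπ.1, fun x y => ?_⟩
  exact (apply_le_marginalEnergy_add hK hk₀ hl₀ hπ.1 x y).trans (add_le_add_left hπ.2 _)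

lemma differentiableAt_marginalEnergy (hh : ∀ x y, ∀ t > 0, DifferentiableAt ℝ (h x y) t)
    (hk : ∀ x, ∀ t > 0, DifferentiableAt ℝ (k x) t)
    (hl : ∀ y, ∀ t > 0, DifferentiableAt ℝ (l y) t) {π : X → Y → ℝ} (hπ : ∀ x y, 0 < π x y) :
    DifferentiableAt ℝ (marginalEnergy h k l) π := by
  rcases isEmpty_or_nonempty X with hX | hX
  · exact (hasFDerivAt_of_subsingleton _ _).differentiableAt
  rcases isEmpty_or_nonempty Y with hY | hY
  · exact (hasFDerivAt_of_subsingleton _ _).differentiableAt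
  refine (DifferentiableAt.fun_sum fun x _ => (DifferentiableAt.fun_sum fun y _ => ?_).add ?_).add
    (DifferentiableAt.fun_sum fun y _ => ?_)
  · exact (hh x y _ (hπ x y)).comp (f := fun π : X → Y → ℝ => π x y) π (by fun_prop)
  · exact (hk x _ (Finset.sum_pos (fun y _ => hπ x y) Finset.univ_nonempty)).comp
      (f := fun π : X → Y → ℝ => ∑ y, π x y) π (by fun_prop)
  · exact (hl y _ (Finset.sum_pos (fun x _ => hπ x y) Finset.univ_nonempty)).comp
      (f := fun π : X → Y → ℝ => ∑ x, π x y) π (by fun_prop)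

lemma marginalEnergy_add_single (π : X → Y → ℝ) (x : X) (y : Y) (t : ℝ) :
    marginalEnergy h k l (π + Pi.single x (Pi.single y t)) = marginalEnergy h k l π +
      ((h x y (π x y + t) - h x y (π x y)) + (k x (∑ y, π x y + t) - k x (∑ y, π x y)) +
        (l y (∑ x, π x y + t) - l y (∑ x, π x y))) := by
  have hcol z : ∑ x', (π + Pi.single x (Pi.single y t) : X → Y → ℝ) x' z =
      ((fun z => ∑ x', π x' z) + Pi.single y t : Y → ℝ) z :=
    (sum_apply_add_single (fun _ v => v z) π x (Pi.single y t)).trans (by simp)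
  have hrow := sum_apply_add_single (fun x v => ∑ y, h x y (v y) + k x (∑ y, v y)) π x
    (Pi.single y t)
  simp only [sum_apply_add_single (h x)] at hrow
  simp only [marginalEnergy, hcol, sum_apply_add_single l, hrow]
  simp only [Pi.add_apply, Finset.sum_add_distrib, Finset.sum_pi_single', Finset.mem_univ, if_true]
  ring

/-- The infinite slope of `h` at `0` makes moving mass onto an empty entry profitable. -/
lemma IsCellMin.marginalEnergy_apply_pos (hslope : ∀ x y, Tendsto (slope (h x y) 0) (𝓝[>] 0) atBot)
    (hk : ∀ x, ConvexOn ℝ (Set.Ici 0) (k x)) (hl : ∀ y, ConvexOn ℝ (Set.Ici 0) (l y))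
    {J : Set X} {π : X → Y → ℝ} (hπ : IsCellMin (marginalEnergy h k l) (Set.Ici 0) J π π)
    {x : X} (hx : x ∈ J) (y : Y) : 0 < π x y := by
  have hπ₀ : 0 ≤ π := hπ.1.1
  refine (hπ₀ x y).lt_of_ne' fun hxy : π x y = 0 => ?_
  have hrow : 0 ≤ ∑ y, π x y := Finset.sum_nonneg fun y _ => hπ₀ x y
  have hcol : 0 ≤ ∑ x, π x y := Finset.sum_nonneg fun x _ => hπ₀ x y
  obtain ⟨t, hslope_t, ht⟩ := (((hslope x y).eventually_lt_atBot
    (-((k x (∑ y, π x y + 1) - k x (∑ y, π x y)) + (l y (∑ x, π x y + 1) - l y (∑ x, π x y))))).and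
      (Ioc_mem_nhdsGT one_pos)).exists
  have hmem : π + Pi.single x (Pi.single y t) ∈ cellSlice (Set.Ici 0) J π := by
    refine ⟨add_nonneg hπ₀ (Pi.single_nonneg.2 (Pi.single_nonneg.2 ht.1.le)), fun z hz => ?_⟩
    simp [show z ≠ x from fun hzx => hz (hzx ▸ hx)]
  have hmin : marginalEnergy h k l π ≤ marginalEnergy h k l (π + Pi.single x (Pi.single y t)) :=
    hπ.2 hmem
  rw [marginalEnergy_add_single, hxy, zero_add] at hmin
  rw [slope_def_field, sub_zero, div_lt_iff₀ ht.1] at hslope_t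
  linarith [add_sub_le_of_convexOn (hk x) hrow ht.1.le ht.2,
    add_sub_le_of_convexOn (hl y) hcol ht.1.le ht.2]

lemma marginalEnergy_eq_cell_add_compl {J : Set X} {π r : X → Y → ℝ} (hr : Set.EqOn r π Jᶜ) :
    marginalEnergy h k l r =
      marginalEnergy (fun x : J => h x) (fun x : J => k x)
        (fun y s => l y (s + outMarg J π y)) (fun x : J => r x) +
      ∑ x : ↥Jᶜ, (∑ y, h x y (π x y) + k x (∑ y, π x y)) := by
  have hr' (x : ↥Jᶜ) : r x = π x := hr x.2
  have hcol y : ∑ x, r x y = ∑ x : J, r x y + outMarg J π y := by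
    rw [outMarg_eq_sum_compl, ← Fintype.sum_subtype_add_sum_subtype (· ∈ J)]
    exact congrArg _ (Finset.sum_congr rfl fun x _ => congrFun (hr' x) y)
  have hrow : ∑ x, (∑ y, h x y (r x y) + k x (∑ y, r x y)) =
      ∑ x : J, (∑ y, h x y (r x y) + k x (∑ y, r x y)) +
        ∑ x : ↥Jᶜ, (∑ y, h x y (π x y) + k x (∑ y, π x y)) := by
    rw [← Fintype.sum_subtype_add_sum_subtype (· ∈ J)]
    exact congrArg _ (Finset.sum_congr rfl fun x _ => by rw [hr' ⟨x, x.2⟩])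
  simp only [marginalEnergy, hrow, hcol]
  ring

end MarginalEnergy

section Perspective

open InformationTheory

/-- The perspective `(m, s) ↦ m f(s / m)` of `f`, which is the summand of the divergence generated
by `f`; for `m = 0` it takes the junk value `0`. -/
def perspective (f : ℝ → ℝ) (m s : ℝ) : ℝ :=
  m * f (s / m)

variable {f : ℝ → ℝ} {m : ℝ}

lemma convexOn_perspective (hf : ConvexOn ℝ (Set.Ici 0) f) (hm : 0 ≤ m) :
    ConvexOn ℝ (Set.Ici 0) (perspective f m) := by
  refine ⟨convex_Ici 0, fun s hs t ht a b ha hb hab => ?_⟩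
  have hchord := hf.2 (div_nonneg hs hm : 0 ≤ s / m) (div_nonneg ht hm : 0 ≤ t / m) ha hb hab
  simp only [smul_eq_mul, perspective] at hchord ⊢
  rw [add_div, mul_div_assoc, mul_div_assoc]
  linarith [mul_le_mul_of_nonneg_left hchord hm]

lemma strictConvexOn_perspective (hf : StrictConvexOn ℝ (Set.Ici 0) f) (hm : 0 < m) :
    StrictConvexOn ℝ (Set.Ici 0) (perspective f m) := by
  refine ⟨convex_Ici 0, fun s hs t ht hst a b ha hb hab => ?_⟩
  have hchord := hf.2 (div_nonneg hs hm.le : 0 ≤ s / m) (div_nonneg ht hm.le : 0 ≤ t / m)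
    (by rwa [Ne, div_left_inj' hm.ne']) ha hb hab
  simp only [smul_eq_mul, perspective] at hchord ⊢
  rw [add_div, mul_div_assoc, mul_div_assoc]
  linarith [mul_lt_mul_of_pos_left hchord hm]

lemma continuousOn_perspective (hf : ContinuousOn f (Set.Ici 0)) (hm : 0 ≤ m) :
    ContinuousOn (perspective f m) (Set.Ici 0) :=
  continuousOn_const.mul (hf.comp (by fun_prop) fun _ hs => div_nonneg hs hm)

lemma differentiableAt_perspective {s : ℝ} (hf : DifferentiableAt ℝ f (s / m)) :
    DifferentiableAt ℝ (perspective f m) s :=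
  (hf.comp (f := fun s => s / m) s (by fun_prop)).const_mul m

lemma perspective_nonneg (hf : ∀ t ≥ 0, 0 ≤ f t) (hm : 0 ≤ m) {s : ℝ} (hs : 0 ≤ s) :
    0 ≤ perspective f m s :=
  mul_nonneg hm (hf _ (div_nonneg hs hm))

lemma perspective_klFun (hm : m ≠ 0) (t : ℝ) :
    perspective klFun m t = t * Real.log (t / m) - t + m := by
  rw [perspective, klFun_apply]
  field_simp
  ring

/-- The Young inequality for `klFun`, whose convex conjugate is `s ↦ exp s - 1`. -/
lemma mul_le_klFun_add_exp_sub_one (s : ℝ) {t : ℝ} (ht : 0 ≤ t) :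
    s * t ≤ klFun t + (Real.exp s - 1) := by
  rcases ht.eq_or_lt with rfl | ht
  · simp [klFun_zero, Real.exp_nonneg]
  · have hexp := Real.add_one_le_exp (s - Real.log t)
    rw [Real.exp_sub, Real.exp_log ht, le_div_iff₀ ht] at hexp
    rw [klFun_apply]
    linarith

/-- The cost `c t + ε KL(t | m)` of putting mass `t` on an entry with transport cost `c` and
reference mass `m`. -/
def entropicCost (c ε m t : ℝ) : ℝ :=
  c * t + ε * perspective klFun m t

variable {c ε : ℝ}

lemma strictConvexOn_entropicCost (hε : 0 < ε) (hm : 0 < m) :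
    StrictConvexOn ℝ (Set.Ici 0) (entropicCost c ε m) := by
  refine ConvexOn.add_strictConvexOn
    ((LinearMap.mulLeft ℝ c).convexOn (convex_Ici 0)) ⟨convex_Ici 0, ?_⟩
  intro s hs t ht hst a b ha hb hab
  have hchord := (strictConvexOn_perspective strictConvexOn_klFun hm).2 hs ht hst ha hb hab
  simp only [smul_eq_mul] at hchord ⊢
  linarith [mul_lt_mul_of_pos_left hchord hε]

lemma continuousOn_entropicCost (hm : 0 ≤ m) :
    ContinuousOn (entropicCost c ε m) (Set.Ici 0) :=
  (continuousOn_const.mul continuousOn_id).add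
    (continuousOn_const.mul (continuousOn_perspective continuous_klFun.continuousOn hm))

lemma differentiableAt_entropicCost (hm : m ≠ 0) {t : ℝ} (ht : t ≠ 0) :
    DifferentiableAt ℝ (entropicCost c ε m) t :=
  (differentiableAt_id.const_mul c).add ((differentiableAt_perspective
    (hasDerivAt_klFun (div_ne_zero ht hm)).differentiableAt).const_mul ε)

lemma exists_le_entropicCost_add (hε : 0 < ε) (hm : 0 < m) :
    ∃ K, ∀ t ≥ 0, t ≤ entropicCost c ε m t + K := by
  refine ⟨ε * m * (Real.exp ((1 - c) / ε) - 1), fun t ht => ?_⟩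
  have hyoung := mul_le_mul_of_nonneg_left
    (mul_le_klFun_add_exp_sub_one ((1 - c) / ε) (div_nonneg ht hm.le)) (mul_pos hε hm).le
  rw [show ε * m * ((1 - c) / ε * (t / m)) = (1 - c) * t by field_simp] at hyoung
  rw [entropicCost, perspective]
  linarith

lemma tendsto_slope_entropicCost_zero (hε : 0 < ε) (hm : m ≠ 0) :
    Tendsto (slope (entropicCost c ε m) 0) (𝓝[>] 0) atBot := by
  have hlim : Tendsto (fun t => ε * Real.log t + (c - ε * (Real.log m + 1))) (𝓝[>] 0) atBot :=
    tendsto_atBot_add_const_right _ _ (Real.tendsto_log_nhdsGT_zero.const_mul_atBot hε)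
  refine hlim.congr' (eventually_mem_nhdsWithin.mono fun t (ht : 0 < t) => ?_)
  rw [slope_def_field, sub_zero, eq_div_iff ht.ne', entropicCost, entropicCost,
    perspective_klFun hm, perspective_klFun hm, Real.log_div ht.ne' hm]
  ring

end Perspective

namespace AssumptionA

variable {φ : ℝ → EReal}

lemma coe_toReal (hφ : AssumptionA φ) {s : ℝ} (hs : 0 ≤ s) : ((φ s).toReal : EReal) = φ s :=
  EReal.coe_toReal (hφ.2.2.1 s hs) (hφ.1.2.2.1 s)

lemma toReal_nonneg (hφ : AssumptionA φ) (s : ℝ) : 0 ≤ (φ s).toReal :=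
  EReal.toReal_nonneg (hφ.2.1 s)

lemma differentiableAt_toReal (hφ : AssumptionA φ) {s : ℝ} (hs : 0 < s) :
    DifferentiableAt ℝ (fun s => (φ s).toReal) s :=
  (hφ.2.2.2.differentiableOn one_ne_zero).differentiableAt (Ioi_mem_nhds hs)

lemma convexOn_toReal (hφ : AssumptionA φ) : ConvexOn ℝ (Set.Ici 0) (fun s => (φ s).toReal) := by
  refine ⟨convex_Ici 0, fun s hs t ht a b ha hb hab => ?_⟩
  have hchord := hφ.1.2.1 s t a b ha hb hab
  rw [← hφ.coe_toReal hs, ← hφ.coe_toReal ht,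
    ← hφ.coe_toReal (add_nonneg (mul_nonneg ha hs) (mul_nonneg hb ht))] at hchord
  exact_mod_cast hchord

lemma continuousOn_toReal (hφ : AssumptionA φ) :
    ContinuousOn (fun s => (φ s).toReal) (Set.Ici 0) := by
  refine continuousOn_Ici_of_convexOn hφ.convexOn_toReal fun y hy => ?_
  have hlt : (y : EReal) < φ 0 := by rwa [← hφ.coe_toReal le_rfl, EReal.coe_lt_coe_iff]
  filter_upwards [nhdsWithin_le_nhds (hφ.1.1 0 y hlt), self_mem_nhdsWithin] with t ht ht₀
  rwa [← hφ.coe_toReal ht₀, gt_iff_lt, EReal.coe_lt_coe_iff] at ht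

end AssumptionA

section UnbalancedEnergy

lemma coe_sum_eq_sum_coe {ι : Type*} (s : Finset ι) (f : ι → ℝ) :
    ((∑ i ∈ s, f i : ℝ) : EReal) = ∑ i ∈ s, (f i : EReal) :=
  map_sum ({ toFun := (↑), map_zero' := EReal.coe_zero, map_add' := EReal.coe_add } : ℝ →+ EReal)
    f s

lemma AssumptionA.divergence_eq_coe {Z : Type*} [Fintype Z] {φ : ℝ → EReal} (hφ : AssumptionA φ)
    {ρ σ : Z → ℝ} (hρ : ∀ z, 0 ≤ ρ z) (hσ : ∀ z, 0 < σ z) :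
    divergence φ ρ σ = (∑ z, perspective (fun s => (φ s).toReal) (σ z) (ρ z) : ℝ) := by
  have hz z : σ z * φ (ρ z / σ z) = (perspective (fun s => (φ s).toReal) (σ z) (ρ z) : ℝ) := by
    rw [perspective, EReal.coe_mul, hφ.coe_toReal (div_nonneg (hρ z) (hσ z).le)]
  simp only [divergence, hσ, (hσ _).ne', if_true, if_false, Finset.sum_const_zero, EReal.coe_zero,
    mul_zero, add_zero, hz, coe_sum_eq_sum_coe]

lemma KLfin_eq_coe {Z : Type*} [Fintype Z] {ρ σ : Z → ℝ} (hσ : ∀ z, σ z ≠ 0) :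
    KLfin ρ σ = (∑ z, perspective InformationTheory.klFun (σ z) (ρ z) : ℝ) := by
  rw [KLfin, if_pos fun z hz => absurd hz (hσ z)]
  simp only [perspective_klFun (hσ _)]

variable {X Y : Type*} [Fintype X] [Fintype Y]

/-- The real-valued objective of the unbalanced problem with `Y`-submarginal `b`; on nonnegative
plans it is `EJfun`, see `EJfun_eq_coe`. -/
def unbalancedEnergy (c : X → Y → ℝ) (ε : ℝ) (φ₁ φ₂ : ℝ → EReal) (μ : X → ℝ) (ν b : Y → ℝ) :
    (X → Y → ℝ) → ℝ :=
  marginalEnergy (fun x y => entropicCost (c x y) ε (μ x * ν y))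
    (fun x => perspective (fun s => (φ₁ s).toReal) (μ x))
    (fun y s => perspective (fun s => (φ₂ s).toReal) (ν y) (s + b y))

variable {c : X → Y → ℝ} {ε : ℝ} {φ₁ φ₂ : ℝ → EReal} {μ : X → ℝ} {ν : Y → ℝ}

lemma EJfun_eq_coe (h₁ : AssumptionA φ₁) (h₂ : AssumptionA φ₂) (hμ : ∀ x, 0 < μ x)
    (hν : ∀ y, 0 < ν y) {b : Y → ℝ} (hb : 0 ≤ b) {π : X → Y → ℝ} (hπ : 0 ≤ π) :
    EJfun c ε φ₁ φ₂ μ ν b π = (unbalancedEnergy c ε φ₁ φ₂ μ ν b π : ℝ) := by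
  rw [EJfun, KLfin_eq_coe (σ := fun p : X × Y => μ p.1 * ν p.2)
      fun z => (mul_pos (hμ z.1) (hν z.2)).ne',
    h₁.divergence_eq_coe (fun x => Finset.sum_nonneg fun y _ => hπ x y) hμ,
    h₂.divergence_eq_coe (fun y => add_nonneg (Finset.sum_nonneg fun x _ => hπ x y) (hb y)) hν]
  norm_cast
  simp only [unbalancedEnergy, marginalEnergy, entropicCost, Fintype.sum_prod_type,
    Finset.sum_add_distrib, Finset.mul_sum]

lemma Eglobal_le_Eglobal_iff (h₁ : AssumptionA φ₁) (h₂ : AssumptionA φ₂) (hμ : ∀ x, 0 < μ x)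
    (hν : ∀ y, 0 < ν y) {π π' : X → Y → ℝ} (hπ : 0 ≤ π) (hπ' : 0 ≤ π') :
    Eglobal c ε φ₁ φ₂ μ ν π ≤ Eglobal c ε φ₁ φ₂ μ ν π' ↔
      unbalancedEnergy c ε φ₁ φ₂ μ ν 0 π ≤ unbalancedEnergy c ε φ₁ φ₂ μ ν 0 π' := by
  have hE {p : X → Y → ℝ} (hp : 0 ≤ p) :
      Eglobal c ε φ₁ φ₂ μ ν p = (unbalancedEnergy c ε φ₁ φ₂ μ ν 0 p : ℝ) :=
    EJfun_eq_coe h₁ h₂ hμ hν le_rfl hp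
  rw [hE hπ, hE hπ', EReal.coe_le_coe_iff]

lemma unbalancedEnergy_eq_cell_add_compl {J : Set X} {π r : X → Y → ℝ} (hr : Set.EqOn r π Jᶜ) :
    unbalancedEnergy c ε φ₁ φ₂ μ ν 0 r =
      unbalancedEnergy (fun (x : J) y => c x y) ε φ₁ φ₂ (fun x : J => μ x) ν (outMarg J π)
        (fun x : J => r x) +
      ∑ x : ↥Jᶜ, (∑ y, entropicCost (c x y) ε (μ x * ν y) (π x y) +
        perspective (fun s => (φ₁ s).toReal) (μ x) (∑ y, π x y)) := by
  simp only [unbalancedEnergy, Pi.zero_apply, add_zero]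
  exact marginalEnergy_eq_cell_add_compl hr

lemma IsCellUpdate.isCellMinMap (h₁ : AssumptionA φ₁) (h₂ : AssumptionA φ₂) (hμ : ∀ x, 0 < μ x)
    (hν : ∀ y, 0 < ν y) {update : Set X → (X → Y → ℝ) → X → Y → ℝ}
    (hupd : IsCellUpdate c ε φ₁ φ₂ μ ν update) :
    IsCellMinMap (unbalancedEnergy c ε φ₁ φ₂ μ ν 0) (Set.Ici 0) update := by
  intro J π hπ
  obtain ⟨hnonneg, hcompl, hmin⟩ := hupd J π hπ
  have heq : Set.EqOn (update J π) π Jᶜ := fun x hx => funext (hcompl x hx)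
  refine ⟨⟨hnonneg, heq⟩, fun r hr => ?_⟩
  have hout : 0 ≤ outMarg J π := fun y =>
    Finset.sum_nonneg fun x _ => Set.indicator_nonneg (fun x _ => hπ x y) x
  have hcell := hmin (fun x : J => r x) fun x => hr.1 x
  rw [EJfun_eq_coe h₁ h₂ (fun x : J => hμ x) hν hout fun x : J => hnonneg x,
    EJfun_eq_coe h₁ h₂ (fun x : J => hμ x) hν hout fun x : J => hr.1 x,
    EReal.coe_le_coe_iff] at hcell
  rw [Set.mem_ofPred_eq, unbalancedEnergy_eq_cell_add_compl heq,
    unbalancedEnergy_eq_cell_add_compl hr.2]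
  exact add_le_add_left hcell _

lemma unbalancedEnergy_zero : unbalancedEnergy c ε φ₁ φ₂ μ ν 0 =
    marginalEnergy (fun x y => entropicCost (c x y) ε (μ x * ν y))
      (fun x => perspective (fun s => (φ₁ s).toReal) (μ x))
      (fun y => perspective (fun s => (φ₂ s).toReal) (ν y)) := by
  simp only [unbalancedEnergy, Pi.zero_apply, add_zero]

lemma strictConvexOn_unbalancedEnergy (h₁ : AssumptionA φ₁) (h₂ : AssumptionA φ₂)
    (hμ : ∀ x, 0 < μ x) (hν : ∀ y, 0 < ν y) (hε : 0 < ε) :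
    StrictConvexOn ℝ (Set.Ici 0) (unbalancedEnergy c ε φ₁ φ₂ μ ν 0) := by
  rw [unbalancedEnergy_zero]
  exact strictConvexOn_marginalEnergy
    (fun x y => strictConvexOn_entropicCost hε (mul_pos (hμ x) (hν y)))
    (fun x => convexOn_perspective h₁.convexOn_toReal (hμ x).le)
    (fun y => convexOn_perspective h₂.convexOn_toReal (hν y).le)

lemma continuousOn_unbalancedEnergy (h₁ : AssumptionA φ₁) (h₂ : AssumptionA φ₂)
    (hμ : ∀ x, 0 ≤ μ x) (hν : ∀ y, 0 ≤ ν y) :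
    ContinuousOn (unbalancedEnergy c ε φ₁ φ₂ μ ν 0) (Set.Ici 0) := by
  rw [unbalancedEnergy_zero]
  exact continuousOn_marginalEnergy
    (fun x y => continuousOn_entropicCost (mul_nonneg (hμ x) (hν y)))
    (fun x => continuousOn_perspective h₁.continuousOn_toReal (hμ x))
    (fun y => continuousOn_perspective h₂.continuousOn_toReal (hν y))

lemma isCompact_sublevel_unbalancedEnergy (h₁ : AssumptionA φ₁) (h₂ : AssumptionA φ₂)
    (hμ : ∀ x, 0 < μ x) (hν : ∀ y, 0 < ν y) (hε : 0 < ε) (C : ℝ) :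
    IsCompact {π ∈ Set.Ici 0 | unbalancedEnergy c ε φ₁ φ₂ μ ν 0 π ≤ C} := by
  rw [unbalancedEnergy_zero]
  exact isCompact_sublevel_marginalEnergy
    (fun x y => continuousOn_entropicCost (mul_pos (hμ x) (hν y)).le)
    (fun x => continuousOn_perspective h₁.continuousOn_toReal (hμ x).le)
    (fun y => continuousOn_perspective h₂.continuousOn_toReal (hν y).le)
    (fun x y => exists_le_entropicCost_add hε (mul_pos (hμ x) (hν y)))
    (fun x _ => perspective_nonneg (fun t _ => h₁.toReal_nonneg t) (hμ x).le)
    (fun y _ => perspective_nonneg (fun t _ => h₂.toReal_nonneg t) (hν y).le) C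

lemma isMinOn_unbalancedEnergy_of_forall_isCellMin (h₁ : AssumptionA φ₁) (h₂ : AssumptionA φ₂)
    (hμ : ∀ x, 0 < μ x) (hν : ∀ y, 0 < ν y) (hε : 0 < ε) {A : List (Set X)}
    (hcover : ∀ x, ∃ J ∈ A, x ∈ J) {π : X → Y → ℝ}
    (hA : ∀ J ∈ A, IsCellMin (unbalancedEnergy c ε φ₁ φ₂ μ ν 0) (Set.Ici 0) J π π) :
    IsMinOn (unbalancedEnergy c ε φ₁ φ₂ μ ν 0) (Set.Ici 0) π := by
  have hpos x y : 0 < π x y := by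
    obtain ⟨J, hJ, hx⟩ := hcover x
    have hcell := hA J hJ
    rw [unbalancedEnergy_zero] at hcell
    exact hcell.marginalEnergy_apply_pos
      (fun x y => tendsto_slope_entropicCost_zero hε (mul_pos (hμ x) (hν y)).ne')
      (fun x => convexOn_perspective h₁.convexOn_toReal (hμ x).le)
      (fun y => convexOn_perspective h₂.convexOn_toReal (hν y).le) hx y
  have hdiff : DifferentiableAt ℝ (unbalancedEnergy c ε φ₁ φ₂ μ ν 0) π := by
    rw [unbalancedEnergy_zero]
    exact differentiableAt_marginalEnergy
      (fun x y t ht => differentiableAt_entropicCost (mul_pos (hμ x) (hν y)).ne' ht.ne')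
      (fun x t ht => differentiableAt_perspective (h₁.differentiableAt_toReal (div_pos ht (hμ x))))
      (fun y t ht => differentiableAt_perspective (h₂.differentiableAt_toReal (div_pos ht (hν y))))
      hpos
  have hnhds : Set.Ici (0 : X → Y → ℝ) ∈ 𝓝 π := by
    rw [← Set.pi_univ_Ici]
    refine set_pi_mem_nhds Set.finite_univ fun x _ => ?_
    rw [← Set.pi_univ_Ici]
    exact set_pi_mem_nhds Set.finite_univ fun y _ => Ici_mem_nhds (hpos x y)
  exact isMinOn_of_forall_isCellMin (strictConvexOn_unbalancedEnergy h₁ h₂ hμ hν hε).convexOn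
    hdiff hnhds hcover hA

theorem IsCellUpdate.exists_isMinOn_and_tendsto (h₁ : AssumptionA φ₁) (h₂ : AssumptionA φ₂)
    (hμ : ∀ x, 0 < μ x) (hν : ∀ y, 0 < ν y) (hε : 0 < ε)
    {update : Set X → (X → Y → ℝ) → X → Y → ℝ} (hupd : IsCellUpdate c ε φ₁ φ₂ μ ν update)
    {L : ℕ → List (Set X)} {A : List (Set X)} (hcover : ∀ x, ∃ J ∈ A, x ∈ J)
    (hL : ∃ᶠ k in atTop, L k = A) {iter : ℕ → X → Y → ℝ} (hiter₀ : 0 ≤ iter 0)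
    (hiter : ∀ k, iter (k + 1) = (L k).foldl (fun π J => update J π) (iter k)) :
    ∃ π ∈ Set.Ici 0, IsMinOn (unbalancedEnergy c ε φ₁ φ₂ μ ν 0) (Set.Ici 0) π ∧
      Tendsto iter atTop (𝓝 π) := by
  have hu := hupd.isCellMinMap h₁ h₂ hμ hν
  have hF := strictConvexOn_unbalancedEnergy (c := c) h₁ h₂ hμ hν hε
  have hFc := continuousOn_unbalancedEnergy (c := c) (ε := ε) h₁ h₂
    (fun x => (hμ x).le) fun y => (hν y).le
  have hK := isCompact_sublevel_unbalancedEnergy (c := c) h₁ h₂ hμ hν hε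
  have hA (π : X → Y → ℝ) (_ : π ∈ Set.Ici 0)
      (hcell : ∀ J ∈ A, IsCellMin (unbalancedEnergy c ε φ₁ φ₂ μ ν 0) (Set.Ici 0) J π π) :=
    isMinOn_unbalancedEnergy_of_forall_isCellMin h₁ h₂ hμ hν hε hcover hcell
  rw [← Set.mem_Ici] at hiter₀
  simp only [← Set.pi_univ_Ici (0 : X → Y → ℝ)] at hu hF hFc hK hA hiter₀ ⊢
  exact hu.exists_isMinOn_and_tendsto hF hFc hK hA hL hiter₀ hiter

end UnbalancedEnergy

lemma IsFinPartition.exists_mem_ofFn {X : Type*} {n : ℕ} {Js : Fin n → Set X}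
    (hJs : IsFinPartition Js) (x : X) : ∃ J ∈ List.ofFn Js, x ∈ J := by
  obtain ⟨i, hi⟩ := Set.mem_iUnion.1 (hJs.2.1 ▸ Set.mem_univ x)
  exact ⟨Js i, List.mem_ofFn.2 ⟨i, rfl⟩, hi⟩

theorem sequential_domdec_converges_general {X Y : Type*} [Fintype X] [Fintype Y]
    (μ : X → ℝ) (ν : Y → ℝ) (hμ : ∀ x, 0 < μ x) (hν : ∀ y, 0 < ν y)
    (c : X → Y → ℝ) (ε : ℝ) (hε : 0 < ε)
    (φ₁ φ₂ : ℝ → EReal) (h₁ : AssumptionA φ₁) (h₂ : AssumptionA φ₂)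
    (update : Set X → (X → Y → ℝ) → (X → Y → ℝ))
    (hupd : IsCellUpdate c ε φ₁ φ₂ μ ν update)
    (L : ℕ → List (Set X)) (A : List (Set X)) (hcover : ∀ x, ∃ J ∈ A, x ∈ J)
    (hL : ∃ᶠ k in atTop, L k = A)
    (iter : ℕ → X → Y → ℝ) (hiter₀ : ∀ x y, 0 ≤ iter 0 x y)
    (hiter : ∀ k, iter (k + 1) = (L k).foldl (fun π J => update J π) (iter k)) :
    ∃ πopt : X → Y → ℝ, (∀ x y, 0 ≤ πopt x y) ∧
      (∀ π' : X → Y → ℝ, (∀ x y, 0 ≤ π' x y) →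
          Eglobal c ε φ₁ φ₂ μ ν πopt ≤ Eglobal c ε φ₁ φ₂ μ ν π') ∧
      (∀ π' : X → Y → ℝ, (∀ x y, 0 ≤ π' x y) →
          (∀ π'' : X → Y → ℝ, (∀ x y, 0 ≤ π'' x y) →
            Eglobal c ε φ₁ φ₂ μ ν π' ≤ Eglobal c ε φ₁ φ₂ μ ν π'') →
          π' = πopt) ∧
      ∀ x y, Tendsto (fun k => iter k x y) atTop (𝓝 (πopt x y)) := by
  obtain ⟨p, hp, hmin, hlim⟩ :=
    hupd.exists_isMinOn_and_tendsto h₁ h₂ hμ hν hε hcover hL hiter₀ hiter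
  have hle {π π' : X → Y → ℝ} := Eglobal_le_Eglobal_iff (c := c) (ε := ε) (π := π) (π' := π')
    h₁ h₂ hμ hν
  refine ⟨p, hp, fun r hr => (hle hp hr).2 (hmin hr), fun r hr hrmin => ?_, fun x y =>
    tendsto_pi_nhds.1 (tendsto_pi_nhds.1 hlim x) y⟩
  exact (strictConvexOn_unbalancedEnergy h₁ h₂ hμ hν hε).eq_of_isMinOn
    (fun q hq => (hle hr hq).1 (hrmin q hq)) hmin hr hp

/-- the sequential domain decomposition iterates, alternating
between partitions `𝒥_A` (odd iterations) and `𝒥_B` (even iterations), converge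
pointwise to the unique global minimizer of the unbalanced objective `E`. -/
theorem sequential_domdec_converges
    {X Y : Type*} [Fintype X] [Fintype Y] [Nonempty X] [Nonempty Y]
    (μ : X → ℝ) (ν : Y → ℝ) (hμ : ∀ x, 0 < μ x) (hν : ∀ y, 0 < ν y)
    (c : X → Y → ℝ) (ε : ℝ) (hε : 0 < ε)
    (φ₁ φ₂ : ℝ → EReal) (h₁ : AssumptionA φ₁) (h₂ : AssumptionA φ₂)
    {nA nB : ℕ} (JA : Fin nA → Set X) (JB : Fin nB → Set X)
    (hJA : IsFinPartition JA) (hJB : IsFinPartition JB)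
    (update : Set X → (X → Y → ℝ) → (X → Y → ℝ))
    (hupd : IsCellUpdate c ε φ₁ φ₂ μ ν update)
    (π0 : X → Y → ℝ) (hπ0 : ∀ x y, 0 ≤ π0 x y)
    (hfin : Eglobal c ε φ₁ φ₂ μ ν π0 ≠ ⊤)
    (iter : ℕ → X → Y → ℝ) (hiter0 : iter 0 = π0)
    (hiterS : ∀ k : ℕ, iter (k + 1) =
      if (k + 1) % 2 = 1 then sweep update JA (iter k) else sweep update JB (iter k)) :
    ∃ πopt : X → Y → ℝ, (∀ x y, 0 ≤ πopt x y) ∧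
      (∀ π' : X → Y → ℝ, (∀ x y, 0 ≤ π' x y) →
          Eglobal c ε φ₁ φ₂ μ ν πopt ≤ Eglobal c ε φ₁ φ₂ μ ν π') ∧
      (∀ π' : X → Y → ℝ, (∀ x y, 0 ≤ π' x y) →
          (∀ π'' : X → Y → ℝ, (∀ x y, 0 ≤ π'' x y) →
            Eglobal c ε φ₁ φ₂ μ ν π' ≤ Eglobal c ε φ₁ φ₂ μ ν π'') →
          π' = πopt) ∧
      ∀ x y, Filter.Tendsto (fun k => iter k x y) Filter.atTop (nhds (πopt x y)) := by
  refine sequential_domdec_converges_general μ ν hμ hν c ε hε φ₁ φ₂ h₁ h₂ update hupd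
    (fun k => if (k + 1) % 2 = 1 then List.ofFn JA else List.ofFn JB) (List.ofFn JA)
    hJA.exists_mem_ofFn (frequently_atTop.2 fun n => ⟨2 * n, by lia, if_pos (by lia)⟩) iter
    (hiter0 ▸ hπ0) fun k => ?_
  rw [hiterS k]
  split_ifs <;> rfl

end
end

section
/- Let X and Y be nonempty finite sets, μ, ν strictly positive weight functions on X and Y, c a cost, ε > 0, φ₁, φ₂ entropy functions satisfying Assumption A, and 𝒥 a partition of X into nonempty subsets. Let π be a nonnegative plan with E(π) < ∞, write π_J := π|_{X_J × Y} for J ∈ 𝒥, and let π̃_J be the unique minimizer of the cell subproblem E_J(·| ν_{-J}) with ν_{-J}(y) := Σ_{x ∉ X_J} π(x,y). Define the averaged update π̄ := Σ_{J ∈ 𝒥} [(1 − 1/|𝒥|)·π_J + (1/|𝒥|)·π̃_J]. Then E(π̄) ≤ E(π), and equality holds only if π_J = π̃_J for every J ∈ 𝒥 (in which case π is the global minimizer of E). -/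
open Filter Topology
open scoped Classical

noncomputable section

/-!
Let `P_J` be the plan `π` with its `J`-part replaced by `π̃_J`. Since `J` is a cell of a partition,
`π̄` is the average of the `P_J`. The terms of `E` that involve only rows outside `J` do not see
the replacement, so `P_J` minimizes `E` among the plans that agree with `π` outside `J`, and Jensen
gives `E(π̄) ≤ E(π)`. Equality forces `E(P_J) = E(π)` for every `J`, hence `P_J = π` by strict
convexity. Then `π` is optimal on each cell. As `KL` has slope `-∞` at zero, `π` is strictly
positive, so `E` is differentiable there. Every direction is a sum of directions supported in single
cells, in each of which the derivative is nonnegative, so `π` is a global minimizer by convexity.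
-/

open Set Function InformationTheory

section ConvexAnalysis

variable {Z E : Type*} [Fintype Z] [AddCommGroup E] [Module ℝ E]

lemma convexOn_sum_pi {f : Z → E → ℝ} {s : Z → Set E} (hf : ∀ z, ConvexOn ℝ (s z) (f z)) :
    ConvexOn ℝ (univ.pi s) fun ρ : Z → E ↦ ∑ z, f z (ρ z) := by
  refine ⟨convex_pi fun z _ ↦ (hf z).1, fun ρ hρ τ hτ a b ha hb hab ↦ ?_⟩
  simp only [smul_eq_mul, Finset.mul_sum, ← Finset.sum_add_distrib]
  exact Finset.sum_le_sum fun z _ ↦ (hf z).2 (hρ z trivial) (hτ z trivial) ha hb hab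

lemma strictConvexOn_sum_pi {f : Z → E → ℝ} {s : Z → Set E}
    (hf : ∀ z, StrictConvexOn ℝ (s z) (f z)) :
    StrictConvexOn ℝ (univ.pi s) fun ρ : Z → E ↦ ∑ z, f z (ρ z) := by
  refine ⟨convex_pi fun z _ ↦ (hf z).1, fun ρ hρ τ hτ hne a b ha hb hab ↦ ?_⟩
  obtain ⟨z₀, hz₀⟩ := ne_iff.1 hne
  simp only [smul_eq_mul, Finset.mul_sum, ← Finset.sum_add_distrib]
  exact Finset.sum_lt_sum
    (fun z _ ↦ (hf z).convexOn.2 (hρ z trivial) (hτ z trivial) ha.le hb.le hab)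
    ⟨z₀, Finset.mem_univ z₀, (hf z₀).2 (hρ z₀ trivial) (hτ z₀ trivial) hz₀ ha hb hab⟩

lemma strictConvexOn_const_mul {f : E → ℝ} {s : Set E} (hf : StrictConvexOn ℝ s f) {k : ℝ}
    (hk : 0 < k) : StrictConvexOn ℝ s fun p ↦ k * f p := by
  refine ⟨hf.1, fun p hp q hq hpq a b ha hb hab ↦ ?_⟩
  calc k * f (a • p + b • q)
      < k * (a • f p + b • f q) := mul_lt_mul_of_pos_left (hf.2 hp hq hpq ha hb hab) hk
    _ = a • (k * f p) + b • (k * f q) := by simp only [smul_eq_mul]; ring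

lemma strictConvexOn_comp_linearMap {E' : Type*} [AddCommGroup E'] [Module ℝ E'] {f : E → ℝ}
    {s : Set E} (hf : StrictConvexOn ℝ s f) {A : E' →ₗ[ℝ] E} (hA : Injective A) :
    StrictConvexOn ℝ (A ⁻¹' s) (f ∘ A) := by
  refine ⟨hf.1.linear_preimage A, fun p hp q hq hpq a b ha hb hab ↦ ?_⟩
  simpa using hf.2 hp hq (hA.ne hpq) ha hb hab

variable {ι : Type*} [Fintype ι] {F : E → ℝ} {C : Set E} {s : ι → Set E} {P : ι → E} {p : E}
  {w : ι → ℝ}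

lemma map_sum_smul_le_of_isMinOn (hF : ConvexOn ℝ C F) (hs : ∀ i, s i ⊆ C)
    (hP : ∀ i, P i ∈ s i) (hmin : ∀ i, IsMinOn F (s i) (P i)) (hp : ∀ i, p ∈ s i)
    (hw : ∀ i, 0 ≤ w i) (hw₁ : ∑ i, w i = 1) : F (∑ i, w i • P i) ≤ F p :=
  calc F (∑ i, w i • P i)
      ≤ ∑ i, w i • F (P i) := hF.map_sum_le (fun i _ ↦ hw i) hw₁ fun i _ ↦ hs i (hP i)
    _ ≤ ∑ i, w i • F p :=
        Finset.sum_le_sum fun i _ ↦ smul_le_smul_of_nonneg_left (hmin i (hp i)) (hw i)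
    _ = F p := by rw [← Finset.sum_smul, hw₁, one_smul]

lemma eq_of_le_map_sum_smul_of_isMinOn (hF : StrictConvexOn ℝ C F) (hs : ∀ i, s i ⊆ C)
    (hsc : ∀ i, Convex ℝ (s i)) (hP : ∀ i, P i ∈ s i) (hmin : ∀ i, IsMinOn F (s i) (P i))
    (hp : ∀ i, p ∈ s i) (hw : ∀ i, 0 < w i) (hw₁ : ∑ i, w i = 1)
    (hle : F p ≤ F (∑ i, w i • P i)) (i : ι) : P i = p := by
  have hterm : ∀ j ∈ Finset.univ, w j • F (P j) ≤ w j • F p := fun j _ ↦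
    smul_le_smul_of_nonneg_left (hmin j (hp j)) (hw j).le
  have hsum : ∑ j, w j • F (P j) = ∑ j, w j • F p := by
    refine (Finset.sum_le_sum hterm).antisymm ?_
    rw [← Finset.sum_smul, hw₁, one_smul]
    exact hle.trans <|
      hF.convexOn.map_sum_le (fun j _ ↦ (hw j).le) hw₁ fun j _ ↦ hs j (hP j)
  have hval : F (P i) = F p :=
    smul_right_injective ℝ (hw i).ne' <|
      (Finset.sum_eq_sum_iff_of_le hterm).1 hsum i (Finset.mem_univ i)
  have hmin_p : IsMinOn F (s i) p := fun q hq ↦ hval.symm.le.trans (hmin i hq)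
  exact (hF.subset (hs i) (hsc i)).eq_of_isMinOn (hmin i) hmin_p (hP i) (hp i)

/-- At `0` the slope of `klFun` is `-∞`, while that of `g` is at most `g 1 - g 0`. -/
lemma not_isMinOn_add_mul_klFun {g : ℝ → ℝ} (hg : ConvexOn ℝ (Ici 0) g) {k : ℝ} (hk : 0 < k) :
    ¬ IsMinOn (fun t ↦ g t + k * klFun t) (Ici 0) 0 := by
  intro hmin
  obtain ⟨t, hlog, ht₀, ht₁⟩ :=
    ((Real.tendsto_log_nhdsGT_zero.eventually_lt_atBot ((g 0 - g 1) / k)).and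
      (Ioo_mem_nhdsGT one_pos)).exists
  have hsecant : g t ≤ (1 - t) * g 0 + t * g 1 := by
    simpa using hg.2 self_mem_Ici (mem_Ici.2 zero_le_one) (sub_nonneg.2 ht₁.le) ht₀.le
      (sub_add_cancel 1 t)
  have hmin_t : g 0 + k ≤ g t + k * (t * Real.log t + 1 - t) := by
    simpa [klFun_apply] using hmin (mem_Ici.2 ht₀.le)
  have hsmall : t * (k * Real.log t) < t * (g 0 - g 1) := by
    rw [mul_lt_mul_iff_right₀ ht₀, mul_comm]
    exact (lt_div_iff₀ hk).1 hlog
  nlinarith [mul_pos hk ht₀]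

end ConvexAnalysis

section FirstOrder

variable {ι E : Type*} [Fintype ι] [NormedAddCommGroup E] [NormedSpace ℝ E] {F : E → ℝ}
  {F' : E →L[ℝ] ℝ} {C : Set E} {p q : E}

lemma hasFDerivAt_apply_sub_le_of_convexOn (hF : ConvexOn ℝ C F) (hF' : HasFDerivAt F F' p)
    (hp : p ∈ C) (hq : q ∈ C) : F' (q - p) ≤ F q - F p := by
  have hline : HasDerivAt (F ∘ AffineMap.lineMap p q) (F' (q - p)) (0 : ℝ) :=
    HasFDerivAt.comp_hasDerivAt_of_eq _ hF' AffineMap.hasDerivAt_lineMap (by simp)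
  have hslope := (hF.comp_affineMap (AffineMap.lineMap p q)).le_slope_of_hasDerivAt
    (x := 0) (y := 1) (by simpa using hp) (by simpa using hq) one_pos hline
  simpa [slope_def_field] using hslope

lemma isMinOn_of_forall_isMinOn_of_sum_sub {s : ι → Set E} (hF : ConvexOn ℝ C F)
    (hF' : DifferentiableAt ℝ F p) (hpC : p ∈ C) (hs : ∀ i, Convex ℝ (s i)) (hp : ∀ i, p ∈ s i)
    (hmin : ∀ i, IsMinOn F (s i) p)
    (hsum : ∀ q ∈ C, ∃ Q : ι → E, (∀ i, Q i ∈ s i) ∧ ∑ i, (Q i - p) = q - p) :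
    IsMinOn F C p := by
  intro q hq
  obtain ⟨Q, hQ, hQsum⟩ := hsum q hq
  have hnonneg : 0 ≤ fderiv ℝ F p (q - p) := by
    rw [← hQsum, map_sum]
    exact Finset.sum_nonneg fun i _ ↦
      (hmin i).localize.hasFDerivWithinAt_nonneg hF'.hasFDerivAt.hasFDerivWithinAt <|
        sub_mem_posTangentConeAt_of_segment_subset ((hs i).segment_subset (hp i) (hQ i))
  exact sub_nonneg.1 <|
    hnonneg.trans (hasFDerivAt_apply_sub_le_of_convexOn hF hF'.hasFDerivAt hpC hq)

end FirstOrder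

section Divergence

variable {Z : Type*} [Fintype Z] {f : ℝ → ℝ} {ρ σ : Z → ℝ}

/-- The divergence `D_f(ρ|σ)` of a real-valued entropy function `f`, for a reference `σ` without
zeros, so that the recession term of `divergence` does not occur. -/
def realDivergence (f : ℝ → ℝ) (ρ σ : Z → ℝ) : ℝ :=
  ∑ z, σ z * f (ρ z / σ z)

lemma ereal_coe_sum (g : Z → ℝ) : ((∑ z, g z : ℝ) : EReal) = ∑ z, (g z : EReal) :=
  map_sum (⟨⟨Real.toEReal, EReal.coe_zero⟩, EReal.coe_add⟩ : ℝ →+ EReal) g Finset.univ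

lemma divergence_eq_coe_realDivergence {φ : ℝ → EReal} (hφ : ∀ s, 0 ≤ s → φ s = f s)
    (hρ : 0 ≤ ρ) (hσ : ∀ z, 0 < σ z) : divergence φ ρ σ = realDivergence f ρ σ := by
  have hsingular : ∑ z, (if σ z = 0 then ρ z else 0) = 0 :=
    Finset.sum_eq_zero fun z _ ↦ if_neg (hσ z).ne'
  rw [divergence, hsingular, EReal.coe_zero, mul_zero, add_zero, realDivergence,
    ereal_coe_sum]
  refine Finset.sum_congr rfl fun z _ ↦ ?_
  rw [if_pos (hσ z), hφ _ (div_nonneg (hρ z) (hσ z).le), EReal.coe_mul]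

lemma KLfin_eq_coe_realDivergence (hσ : ∀ z, σ z ≠ 0) :
    KLfin ρ σ = realDivergence klFun ρ σ := by
  rw [KLfin, if_pos fun z hz ↦ absurd hz (hσ z), realDivergence]
  refine congrArg _ (Finset.sum_congr rfl fun z _ ↦ ?_)
  have := hσ z
  rw [klFun_apply]
  field_simp
  ring

lemma convexOn_mul_comp_div (hf : ConvexOn ℝ (Ici 0) f) {m : ℝ} (hm : 0 < m) :
    ConvexOn ℝ (Ici 0) fun r ↦ m * f (r / m) :=
  ((hf.comp_linearMap (LinearMap.mulRight ℝ m⁻¹)).smul hm.le).subset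
    (fun _ hr ↦ div_nonneg hr hm.le) (convex_Ici 0)

lemma strictConvexOn_mul_comp_div (hf : StrictConvexOn ℝ (Ici 0) f) {m : ℝ} (hm : 0 < m) :
    StrictConvexOn ℝ (Ici 0) fun r ↦ m * f (r / m) :=
  (strictConvexOn_const_mul (strictConvexOn_comp_linearMap hf (A := LinearMap.mulRight ℝ m⁻¹)
    (mul_left_injective₀ (inv_ne_zero hm.ne'))) hm).subset
      (fun _ hr ↦ div_nonneg hr hm.le) (convex_Ici 0)

lemma convexOn_realDivergence (hf : ConvexOn ℝ (Ici 0) f) (hσ : ∀ z, 0 < σ z) :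
    ConvexOn ℝ (Ici 0) fun ρ ↦ realDivergence f ρ σ := by
  rw [← pi_univ_Ici]
  exact convexOn_sum_pi fun z ↦ convexOn_mul_comp_div hf (hσ z)

lemma strictConvexOn_realDivergence (hf : StrictConvexOn ℝ (Ici 0) f) (hσ : ∀ z, 0 < σ z) :
    StrictConvexOn ℝ (Ici 0) fun ρ ↦ realDivergence f ρ σ := by
  rw [← pi_univ_Ici]
  exact strictConvexOn_sum_pi fun z ↦ strictConvexOn_mul_comp_div hf (hσ z)

lemma differentiableAt_realDivergence_comp {E : Type*} [NormedAddCommGroup E] [NormedSpace ℝ E]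
    {A : E → Z → ℝ} {p : E} (hA : DifferentiableAt ℝ A p) (hf : DifferentiableOn ℝ f (Ioi 0))
    (hσ : ∀ z, 0 < σ z) (hp : ∀ z, 0 < A p z) :
    DifferentiableAt ℝ (fun q ↦ realDivergence f (A q) σ) p := by
  refine DifferentiableAt.fun_sum fun z _ ↦ DifferentiableAt.const_mul ?_ (σ z)
  have hfz : DifferentiableAt ℝ f (A p z / σ z) :=
    hf.differentiableAt (Ioi_mem_nhds (div_pos (hp z) (hσ z)))
  have hAz : DifferentiableAt ℝ (fun q ↦ A q z / σ z) p :=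
    (differentiableAt_pi.1 hA z).mul_const (σ z)⁻¹
  exact DifferentiableAt.comp (g := f) p hfz hAz

lemma realDivergence_add_single [DecidableEq Z] (z : Z) (r : ℝ) :
    realDivergence f (ρ + Pi.single z r) σ
      = realDivergence f ρ σ + σ z * (f ((ρ z + r) / σ z) - f (ρ z / σ z)) := by
  rw [← sub_eq_iff_eq_add', realDivergence, realDivergence, ← Finset.sum_sub_distrib,
    Fintype.sum_eq_single z]
  · simp [mul_sub]
  · intro z' hz'
    simp [hz']

end Divergence

section Score

variable {X Y : Type*} [Fintype X] [Fintype Y]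

/-- The transport cost `⟨c, π⟩`, linear in the plan `π`. -/
def transportCost (c : X → Y → ℝ) : (X → Y → ℝ) →ₗ[ℝ] ℝ where
  toFun p := ∑ x, ∑ y, c x y * p x y
  map_add' p q := by simp only [Pi.add_apply, mul_add, Finset.sum_add_distrib]
  map_smul' a p := by
    simp only [Pi.smul_apply, smul_eq_mul, mul_left_comm, Finset.mul_sum, RingHom.id_apply]

/-- The marginal operator `P_X`. -/
def rowMarginal : (X → Y → ℝ) →ₗ[ℝ] X → ℝ where
  toFun p x := ∑ y, p x y
  map_add' p q := by ext x; simp only [Pi.add_apply, Finset.sum_add_distrib]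
  map_smul' a p := by
    ext x; simp only [Pi.smul_apply, smul_eq_mul, Finset.mul_sum, RingHom.id_apply]

/-- The marginal operator `P_Y`. -/
def colMarginal : (X → Y → ℝ) →ₗ[ℝ] Y → ℝ where
  toFun p y := ∑ x, p x y
  map_add' p q := by ext y; simp only [Pi.add_apply, Finset.sum_add_distrib]
  map_smul' a p := by
    ext y; simp only [Pi.smul_apply, smul_eq_mul, Finset.mul_sum, RingHom.id_apply]

/-- The real-valued objective without its entropic regularization,
`⟨c, π⟩ + D_{f₁}(P_X π | μ) + D_{f₂}(P_Y π + νm | ν)`. -/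
def unregularizedScore (c : X → Y → ℝ) (f₁ f₂ : ℝ → ℝ) (μ : X → ℝ) (ν νm : Y → ℝ)
    (p : X → Y → ℝ) : ℝ :=
  transportCost c p + realDivergence f₁ (rowMarginal p) μ
    + realDivergence f₂ (colMarginal p + νm) ν

/-- The real-valued counterpart of `EJfun`, for real-valued entropy functions and
strictly positive `μ` and `ν`. -/
def score (c : X → Y → ℝ) (ε : ℝ) (f₁ f₂ : ℝ → ℝ) (μ : X → ℝ) (ν νm : Y → ℝ)
    (p : X → Y → ℝ) : ℝ :=
  unregularizedScore c f₁ f₂ μ ν νm p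
    + ε * realDivergence klFun (uncurry p) fun z ↦ μ z.1 * ν z.2

variable {c : X → Y → ℝ} {ε : ℝ} {f₁ f₂ : ℝ → ℝ} {μ : X → ℝ} {ν νm : Y → ℝ} {p : X → Y → ℝ}

lemma EJfun_eq_coe_score {φ₁ φ₂ : ℝ → EReal} (hφ₁ : ∀ s, 0 ≤ s → φ₁ s = f₁ s)
    (hφ₂ : ∀ s, 0 ≤ s → φ₂ s = f₂ s) (hμ : ∀ x, 0 < μ x) (hν : ∀ y, 0 < ν y) (hνm : 0 ≤ νm)
    (hp : 0 ≤ p) : EJfun c ε φ₁ φ₂ μ ν νm p = score c ε f₁ f₂ μ ν νm p := by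
  have hrow : (0 : X → ℝ) ≤ fun x ↦ ∑ y, p x y := fun x ↦ Finset.sum_nonneg fun y _ ↦ hp x y
  have hcol : (0 : Y → ℝ) ≤ fun y ↦ ∑ x, p x y + νm y := fun y ↦
    add_nonneg (Finset.sum_nonneg fun x _ ↦ hp x y) (hνm y)
  rw [EJfun, divergence_eq_coe_realDivergence hφ₁ hrow hμ,
    divergence_eq_coe_realDivergence hφ₂ hcol hν,
    KLfin_eq_coe_realDivergence fun z : X × Y ↦ (mul_pos (hμ z.1) (hν z.2)).ne']
  norm_cast
  simp only [score, unregularizedScore, add_right_comm _ (ε * _)]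
  rfl

lemma convexOn_unregularizedScore (hf₁ : ConvexOn ℝ (Ici 0) f₁) (hf₂ : ConvexOn ℝ (Ici 0) f₂)
    (hμ : ∀ x, 0 < μ x) (hν : ∀ y, 0 < ν y) (hνm : 0 ≤ νm) :
    ConvexOn ℝ (Ici 0) (unregularizedScore c f₁ f₂ μ ν νm) := by
  have hcost : ConvexOn ℝ (Ici 0) (transportCost c) := (transportCost c).convexOn (convex_Ici 0)
  have hrow : ConvexOn ℝ (Ici 0) fun p : X → Y → ℝ ↦ realDivergence f₁ (rowMarginal p) μ :=
    ((convexOn_realDivergence hf₁ hμ).comp_linearMap rowMarginal).subset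
      (fun (p : X → Y → ℝ) (hp : 0 ≤ p) x ↦ Finset.sum_nonneg fun y _ ↦ hp x y) (convex_Ici 0)
  have hcol : ConvexOn ℝ (Ici 0) fun p : X → Y → ℝ ↦ realDivergence f₂ (colMarginal p + νm) ν :=
    (((convexOn_realDivergence hf₂ hν).translate_left νm).comp_linearMap colMarginal).subset
        (fun (p : X → Y → ℝ) (hp : 0 ≤ p) y ↦
          add_nonneg (hνm y) (Finset.sum_nonneg fun x _ ↦ hp x y))
        (convex_Ici 0)
  exact (hcost.add hrow).add hcol

lemma strictConvexOn_score (hε : 0 < ε) (hf₁ : ConvexOn ℝ (Ici 0) f₁)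
    (hf₂ : ConvexOn ℝ (Ici 0) f₂) (hμ : ∀ x, 0 < μ x) (hν : ∀ y, 0 < ν y) (hνm : 0 ≤ νm) :
    StrictConvexOn ℝ (Ici 0) (score c ε f₁ f₂ μ ν νm) := by
  have hKL : StrictConvexOn ℝ (Ici 0) fun p : X → Y → ℝ ↦
      ε * realDivergence klFun (uncurry p) fun z ↦ μ z.1 * ν z.2 := by
    have hdiv := strictConvexOn_realDivergence strictConvexOn_klFun
      fun z : X × Y ↦ mul_pos (hμ z.1) (hν z.2)
    exact (strictConvexOn_const_mul (strictConvexOn_comp_linearMap hdiv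
      (LinearEquiv.curry ℝ ℝ X Y).symm.injective) hε).subset
        (fun (p : X → Y → ℝ) (hp : 0 ≤ p) z ↦ hp z.1 z.2) (convex_Ici 0)
  exact (convexOn_unregularizedScore hf₁ hf₂ hμ hν hνm).add_strictConvexOn hKL

lemma differentiableAt_score [Nonempty X] [Nonempty Y] (hf₁ : DifferentiableOn ℝ f₁ (Ioi 0))
    (hf₂ : DifferentiableOn ℝ f₂ (Ioi 0)) (hμ : ∀ x, 0 < μ x) (hν : ∀ y, 0 < ν y) (hνm : 0 ≤ νm)
    (hp : ∀ x y, 0 < p x y) : DifferentiableAt ℝ (score c ε f₁ f₂ μ ν νm) p := by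
  have hKL : DifferentiableAt ℝ
      (fun q ↦ realDivergence klFun (uncurry q) fun z ↦ μ z.1 * ν z.2) p :=
    differentiableAt_realDivergence_comp
      (LinearEquiv.curry ℝ ℝ X Y).symm.toLinearMap.toContinuousLinearMap.differentiableAt
      (fun t ht ↦ (hasDerivAt_klFun (ne_of_gt ht)).differentiableAt.differentiableWithinAt)
      (fun z ↦ mul_pos (hμ z.1) (hν z.2)) fun z ↦ hp z.1 z.2
  have hrow : DifferentiableAt ℝ (fun q ↦ realDivergence f₁ (rowMarginal q) μ) p :=
    differentiableAt_realDivergence_comp rowMarginal.toContinuousLinearMap.differentiableAt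
      hf₁ hμ fun x ↦ Finset.sum_pos (fun y _ ↦ hp x y) Finset.univ_nonempty
  have hcol : DifferentiableAt ℝ (fun q ↦ realDivergence f₂ (colMarginal q + νm) ν) p :=
    differentiableAt_realDivergence_comp
      (colMarginal.toContinuousLinearMap.differentiableAt.add_const νm) hf₂ hν fun y ↦
        add_pos_of_pos_of_nonneg (Finset.sum_pos (fun x _ ↦ hp x y) Finset.univ_nonempty) (hνm y)
  have hcost : DifferentiableAt ℝ (transportCost c) p :=
    (transportCost c).toContinuousLinearMap.differentiableAt
  exact ((hcost.add hrow).add hcol).add (hKL.const_mul ε)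

lemma score_add_single (hμ : ∀ x, 0 < μ x) (hν : ∀ y, 0 < ν y) {x : X} {y : Y}
    (hxy : p x y = 0) (t : ℝ) :
    score c ε f₁ f₂ μ ν νm (p + Pi.single x (Pi.single y (t * (μ x * ν y))))
      = unregularizedScore c f₁ f₂ μ ν νm (p + Pi.single x (Pi.single y (t * (μ x * ν y))))
        + ε * (realDivergence klFun (uncurry p) (fun z ↦ μ z.1 * ν z.2) - μ x * ν y)
        + ε * (μ x * ν y) * klFun t := by
  have hm : μ x * ν y ≠ 0 := (mul_pos (hμ x) (hν y)).ne'
  have hcurry (r : ℝ) : uncurry (p + Pi.single x (Pi.single y r))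
      = uncurry p + Pi.single (x, y) r := by
    rw [← Pi.uncurry_single_single]
    rfl
  rw [score, hcurry, realDivergence_add_single, uncurry_apply_pair, hxy, zero_add, zero_div,
    klFun_zero, mul_div_cancel_right₀ t hm]
  ring

lemma convexOn_unregularizedScore_add_smul (hf₁ : ConvexOn ℝ (Ici 0) f₁)
    (hf₂ : ConvexOn ℝ (Ici 0) f₂) (hμ : ∀ x, 0 < μ x) (hν : ∀ y, 0 < ν y) (hνm : 0 ≤ νm)
    (hp : 0 ≤ p) {d : X → Y → ℝ} (hd : 0 ≤ d) :
    ConvexOn ℝ (Ici 0) fun t : ℝ ↦ unregularizedScore c f₁ f₂ μ ν νm (p + t • d) :=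
  ((convexOn_unregularizedScore hf₁ hf₂ hμ hν hνm).comp_affineMap
    (AffineMap.const ℝ ℝ p + (LinearMap.toSpanSingleton ℝ _ d).toAffineMap)).subset
      (fun t (ht : 0 ≤ t) ↦ add_nonneg hp (smul_nonneg ht hd : 0 ≤ t • d)) (convex_Ici 0)

lemma pos_of_score_le_score_add_single (hε : 0 < ε) (hf₁ : ConvexOn ℝ (Ici 0) f₁)
    (hf₂ : ConvexOn ℝ (Ici 0) f₂) (hμ : ∀ x, 0 < μ x) (hν : ∀ y, 0 < ν y) (hνm : 0 ≤ νm)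
    (hp : 0 ≤ p) {x : X} {y : Y}
    (hmin : ∀ r, 0 ≤ r → score c ε f₁ f₂ μ ν νm p
      ≤ score c ε f₁ f₂ μ ν νm (p + Pi.single x (Pi.single y r))) :
    0 < p x y := by
  refine (hp x y).lt_of_ne fun h0 ↦ ?_
  have hxy : p x y = 0 := h0.symm
  have hm : 0 < μ x * ν y := mul_pos (hμ x) (hν y)
  have hd : (0 : X → Y → ℝ) ≤ Pi.single x (Pi.single y (μ x * ν y)) :=
    Pi.single_nonneg.2 (Pi.single_nonneg.2 hm.le)
  have hray := convexOn_unregularizedScore_add_smul (c := c) hf₁ hf₂ hμ hν hνm hp hd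
  simp only [← Pi.single_smul, smul_eq_mul] at hray
  refine not_isMinOn_add_mul_klFun (hray.add_const
    (ε * (realDivergence klFun (uncurry p) (fun z ↦ μ z.1 * ν z.2) - μ x * ν y)))
    (mul_pos hε hm) fun t (ht : 0 ≤ t) ↦ ?_
  have hle := hmin (t * (μ x * ν y)) (mul_nonneg ht hm.le)
  have hzero := score_add_single (c := c) (ε := ε) (f₁ := f₁) (f₂ := f₂) (νm := νm) hμ hν hxy 0
  rw [score_add_single hμ hν hxy] at hle
  simp only [zero_mul, Pi.single_zero, add_zero] at hzero
  simpa [← hzero] using hle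

end Score

section Cells

variable {X Y : Type*}

/-- The plan `π` with its restriction to the cell `J` replaced by `q`. -/
def replaceCell (J : Set X) (q : J → Y → ℝ) (π : X → Y → ℝ) : X → Y → ℝ :=
  extend Subtype.val q π

/-- The competitors of `π` in the subproblem of the cell `J`, as plans on all of `X × Y`. -/
def cellPlans (J : Set X) (π : X → Y → ℝ) : Set (X → Y → ℝ) :=
  {p | 0 ≤ p ∧ EqOn p π Jᶜ}

variable {J : Set X} {q : J → Y → ℝ} {π p : X → Y → ℝ} {x : X}

lemma replaceCell_coe (j : J) : replaceCell J q π j = q j :=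
  Subtype.val_injective.extend_apply q π j

lemma replaceCell_of_notMem (hx : x ∉ J) : replaceCell J q π x = π x :=
  extend_apply' _ _ _ fun ⟨j, hj⟩ ↦ hx (hj ▸ j.2)

lemma domRestrict_replaceCell : J.domRestrict (replaceCell J q π) = q :=
  funext replaceCell_coe

lemma cellPlans_subset_Ici : cellPlans J π ⊆ Ici 0 := fun _ hp ↦ hp.1

lemma self_mem_cellPlans (hπ : 0 ≤ π) : π ∈ cellPlans J π := ⟨hπ, eqOn_refl π _⟩

lemma convex_cellPlans : Convex ℝ (cellPlans J π) := by
  refine fun p hp q hq a b ha hb hab ↦ ⟨convex_Ici (0 : X → Y → ℝ) hp.1 hq.1 ha hb hab, ?_⟩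
  intro x hx
  simp [hp.2 hx, hq.2 hx, ← add_smul, hab]

lemma replaceCell_mem_cellPlans (hπ : 0 ≤ π) (hq : 0 ≤ q) : replaceCell J q π ∈ cellPlans J π := by
  refine ⟨fun x ↦ ?_, fun x hx ↦ replaceCell_of_notMem hx⟩
  by_cases hx : x ∈ J
  · exact (hq ⟨x, hx⟩).trans_eq (replaceCell_coe ⟨x, hx⟩).symm
  · exact (hπ x).trans_eq (replaceCell_of_notMem hx).symm

lemma replaceCell_domRestrict (hp : p ∈ cellPlans J π) : replaceCell J (J.domRestrict p) π = p := by
  ext1 x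
  by_cases hx : x ∈ J
  · exact replaceCell_coe ⟨x, hx⟩
  · exact (replaceCell_of_notMem hx).trans (hp.2 hx).symm

lemma replaceCell_domRestrict_sub :
    replaceCell J (J.domRestrict p) π - π = J.indicator (p - π) := by
  ext1 x
  by_cases hx : x ∈ J
  · simpa [hx] using replaceCell_coe (q := J.domRestrict p) (π := π) ⟨x, hx⟩
  · simp [hx, replaceCell_of_notMem hx]

lemma sum_indicator_of_iUnion_eq_univ {ι M : Type*} [Fintype ι] [AddCommMonoid M]
    {Js : ι → Set X} (hcover : ⋃ i, Js i = univ) (hdisj : Pairwise (Disjoint on Js))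
    (g : X → M) : ∑ i, (Js i).indicator g = g := by
  have hunion := Finset.indicator_biUnion Finset.univ Js (f := g) (hdisj.set_pairwise _)
  ext1 x
  simpa [hcover] using (congrFun hunion x).symm

variable [Fintype X]

lemma colMarginal_replaceCell :
    colMarginal (replaceCell J q π) = colMarginal q + outMarg J π := by
  ext y
  have hin (j : J) : Jᶜ.indicator (π · y) j = 0 := indicator_of_notMem (notMem_compl_iff.2 j.2) _
  have hout (x : {x // x ∉ J}) : replaceCell J q π x y = Jᶜ.indicator (π · y) x := by
    rw [replaceCell_of_notMem x.2, indicator_of_mem x.2]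
  calc ∑ x, replaceCell J q π x y
      = ∑ j : J, q j y + ∑ x : {x // x ∉ J}, Jᶜ.indicator (π · y) x := by
        rw [← Fintype.sum_subtype_add_sum_subtype (· ∈ J)]
        simp only [replaceCell_coe, hout]
    _ = ∑ j : J, q j y + outMarg J π y := by
        rw [outMarg, ← Fintype.sum_subtype_add_sum_subtype (· ∈ J)]
        simp only [hin, Finset.sum_const_zero, zero_add]

lemma outMarg_nonneg (hπ : 0 ≤ π) : 0 ≤ outMarg J π := fun y ↦
  Finset.sum_nonneg fun _ _ ↦ indicator_nonneg (fun x _ ↦ hπ x y) _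


variable [Fintype Y]

/-- The part of the score that depends on a single row `r` of the plan, with cost `a` and mass
`m` of that row. -/
def rowScore (a : Y → ℝ) (ε : ℝ) (f : ℝ → ℝ) (m : ℝ) (ν : Y → ℝ) (r : Y → ℝ) : ℝ :=
  ∑ y, a y * r y + m * f ((∑ y, r y) / m) + ε * realDivergence klFun r fun y ↦ m * ν y

variable {c : X → Y → ℝ} {ε : ℝ} {f₁ f₂ : ℝ → ℝ} {μ : X → ℝ} {ν νm : Y → ℝ}

lemma score_eq_sum_rowScore : score c ε f₁ f₂ μ ν νm p
    = ∑ x, rowScore (c x) ε f₁ (μ x) ν (p x) + realDivergence f₂ (colMarginal p + νm) ν := by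
  simp only [score, unregularizedScore, rowScore, transportCost, rowMarginal, realDivergence,
    LinearMap.coe_mk, AddHom.coe_mk, Finset.sum_add_distrib, Fintype.sum_prod_type, uncurry,
    Finset.mul_sum]
  ring

lemma score_replaceCell : score c ε f₁ f₂ μ ν 0 (replaceCell J q π)
    = score (fun j : J ↦ c j) ε f₁ f₂ (fun j : J ↦ μ j) ν (outMarg J π) q
      + ∑ x : {x // x ∉ J}, rowScore (c x) ε f₁ (μ x) ν (π x) := by
  have hin : ∑ j : {x // x ∈ J}, rowScore (c j) ε f₁ (μ j) ν (replaceCell J q π j)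
      = ∑ j : J, rowScore (c j) ε f₁ (μ j) ν (q j) := by
    simp only [replaceCell_coe]
  have hout : ∑ x : {x // x ∉ J}, rowScore (c x) ε f₁ (μ x) ν (replaceCell J q π x)
      = ∑ x : {x // x ∉ J}, rowScore (c x) ε f₁ (μ x) ν (π x) :=
    Finset.sum_congr rfl fun x _ ↦ by rw [replaceCell_of_notMem x.2]
  rw [score_eq_sum_rowScore, score_eq_sum_rowScore, colMarginal_replaceCell, add_zero,
    ← Fintype.sum_subtype_add_sum_subtype (· ∈ J), hin, hout, add_right_comm]

lemma isMinOn_score_replaceCell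
    (hq : IsMinOn (score (fun j : J ↦ c j) ε f₁ f₂ (fun j : J ↦ μ j) ν (outMarg J π)) (Ici 0) q) :
    IsMinOn (score c ε f₁ f₂ μ ν 0) (cellPlans J π) (replaceCell J q π) := by
  intro p hp
  rw [mem_ofPred, ← replaceCell_domRestrict hp, score_replaceCell, score_replaceCell]
  exact add_le_add_left (hq fun j ↦ hp.1 j) _

lemma isMinOn_score_of_forall_cellPlans {ι : Type*} [Finite ι] {Js : ι → Set X} [Nonempty X]
    [Nonempty Y] (hε : 0 < ε)
    (hf₁ : ConvexOn ℝ (Ici 0) f₁) (hf₂ : ConvexOn ℝ (Ici 0) f₂)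
    (hf₁' : DifferentiableOn ℝ f₁ (Ioi 0)) (hf₂' : DifferentiableOn ℝ f₂ (Ioi 0))
    (hμ : ∀ x, 0 < μ x) (hν : ∀ y, 0 < ν y) (hcover : ⋃ i, Js i = univ)
    (hdisj : Pairwise (Disjoint on Js)) (hπ : 0 ≤ π)
    (hmin : ∀ i, IsMinOn (score c ε f₁ f₂ μ ν 0) (cellPlans (Js i) π) π) :
    IsMinOn (score c ε f₁ f₂ μ ν 0) (Ici 0) π := by
  cases nonempty_fintype ι
  have hpos (x : X) (y : Y) : 0 < π x y := by
    obtain ⟨i, hi⟩ := mem_iUnion.1 (hcover ▸ mem_univ x)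
    refine pos_of_score_le_score_add_single hε hf₁ hf₂ hμ hν le_rfl hπ fun r hr ↦
      hmin i ⟨?_, ?_⟩
    · exact add_nonneg hπ (Pi.single_nonneg.2 (Pi.single_nonneg.2 hr))
    · intro x' hx'
      simp [show x' ≠ x from fun h ↦ hx' (h ▸ hi)]
  refine isMinOn_of_forall_isMinOn_of_sum_sub
    (strictConvexOn_score hε hf₁ hf₂ hμ hν le_rfl).convexOn
    (differentiableAt_score hf₁' hf₂' hμ hν le_rfl hpos) hπ (fun _ ↦ convex_cellPlans)
    (fun _ ↦ self_mem_cellPlans hπ) hmin fun r hr ↦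
      ⟨fun i ↦ replaceCell (Js i) ((Js i).domRestrict r) π,
        fun i ↦ replaceCell_mem_cellPlans hπ fun j ↦ hr j, ?_⟩
  simp only [replaceCell_domRestrict_sub]
  exact sum_indicator_of_iUnion_eq_univ hcover hdisj (r - π)

end Cells

section Update

variable {X Y : Type*}

lemma AssumptionA.eq_coe_toReal {φ : ℝ → EReal} (hφ : AssumptionA φ) {s : ℝ} (hs : 0 ≤ s) :
    φ s = (φ s).toReal :=
  (EReal.coe_toReal (hφ.2.2.1 s hs) (hφ.1.2.2.1 s)).symm

lemma AssumptionA.convexOn_toReal_s10 {φ : ℝ → EReal} (hφ : AssumptionA φ) :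
    ConvexOn ℝ (Ici 0) fun s ↦ (φ s).toReal := by
  refine ⟨convex_Ici 0, fun s hs t ht a b ha hb hab ↦ ?_⟩
  have hconv := hφ.1.2.1 s t a b ha hb hab
  rw [hφ.eq_coe_toReal hs, hφ.eq_coe_toReal ht,
    hφ.eq_coe_toReal (s := a * s + b * t) (convex_Ici (0 : ℝ) hs ht ha hb hab)] at hconv
  exact_mod_cast hconv

lemma AssumptionA.differentiableOn_toReal {φ : ℝ → EReal} (hφ : AssumptionA φ) :
    DifferentiableOn ℝ (fun s ↦ (φ s).toReal) (Ioi 0) :=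
  hφ.2.2.2.differentiableOn one_ne_zero

variable {ι : Type*} [Fintype ι] {J : ι → Set X} {π : X → Y → ℝ} {q : (i : ι) → J i → Y → ℝ}

lemma average_eq_sum_smul_replaceCell (hcover : ⋃ i, J i = univ)
    (hdisj : Pairwise (Disjoint on J)) {a : ℝ} (ha : Fintype.card ι * a = 1) :
    (fun x y ↦ (1 - a) * π x y + a * ∑ i, if h : x ∈ J i then q i ⟨x, h⟩ y else 0)
      = ∑ i, a • replaceCell (J i) (q i) π := by
  have hsplit (i : ι) (x : X) (y : Y) : replaceCell (J i) (q i) π x y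
      = π x y - (J i).indicator π x y + if h : x ∈ J i then q i ⟨x, h⟩ y else 0 := by
    by_cases hx : x ∈ J i
    · simpa [hx] using congrFun (replaceCell_coe (q := q i) (π := π) ⟨x, hx⟩) y
    · simp [hx, replaceCell_of_notMem hx]
  ext x y
  have hπ : ∑ i, (J i).indicator π x y = π x y := by
    simpa only [Finset.sum_apply]
      using congrFun₂ (sum_indicator_of_iUnion_eq_univ hcover hdisj π) x y
  simp only [Finset.sum_apply, Pi.smul_apply, smul_eq_mul, hsplit, ← Finset.mul_sum,
    Finset.sum_add_distrib, Finset.sum_sub_distrib, hπ, Finset.sum_const, Finset.card_univ,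
    nsmul_eq_mul]
  linear_combination -π x y * ha

variable [Fintype X] [Fintype Y] {c : X → Y → ℝ} {ε : ℝ} {φ₁ φ₂ : ℝ → EReal} {f₁ f₂ : ℝ → ℝ}
  {μ : X → ℝ} {ν : Y → ℝ}

lemma isMinOn_EJfun_iff {νm : Y → ℝ} {p : X → Y → ℝ} (hφ₁ : ∀ s, 0 ≤ s → φ₁ s = f₁ s)
    (hφ₂ : ∀ s, 0 ≤ s → φ₂ s = f₂ s) (hμ : ∀ x, 0 < μ x) (hν : ∀ y, 0 < ν y) (hνm : 0 ≤ νm)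
    (hp : 0 ≤ p) : IsMinOn (EJfun c ε φ₁ φ₂ μ ν νm) (Ici 0) p
      ↔ IsMinOn (score c ε f₁ f₂ μ ν νm) (Ici 0) p := by
  refine forall₂_congr fun r hr ↦ ?_
  rw [mem_ofPred, mem_ofPred, EJfun_eq_coe_score hφ₁ hφ₂ hμ hν hνm hp,
    EJfun_eq_coe_score hφ₁ hφ₂ hμ hν hνm hr, EReal.coe_le_coe_iff]

theorem safe_parallel_update_decrement_general [Nonempty X] [Nonempty Y]
    (hμ : ∀ x, 0 < μ x) (hν : ∀ y, 0 < ν y) (hε : 0 < ε)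
    (hφ₁ : ∀ s, 0 ≤ s → φ₁ s = f₁ s) (hφ₂ : ∀ s, 0 ≤ s → φ₂ s = f₂ s)
    (hf₁ : ConvexOn ℝ (Ici 0) f₁) (hf₂ : ConvexOn ℝ (Ici 0) f₂)
    (hf₁' : DifferentiableOn ℝ f₁ (Ioi 0)) (hf₂' : DifferentiableOn ℝ f₂ (Ioi 0))
    (hcover : ⋃ i, J i = univ) (hdisj : Pairwise (Disjoint on J))
    {w : ι → ℝ} (hw : ∀ i, 0 < w i) (hw₁ : ∑ i, w i = 1)
    (hπ : 0 ≤ π) (hq : ∀ i, 0 ≤ q i)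
    (hmin : ∀ i, IsMinOn (EJfun (fun j : J i ↦ c j) ε φ₁ φ₂ (fun j : J i ↦ μ j) ν
      (outMarg (J i) π)) (Ici 0) (q i)) :
    Eglobal c ε φ₁ φ₂ μ ν (∑ i, w i • replaceCell (J i) (q i) π) ≤ Eglobal c ε φ₁ φ₂ μ ν π ∧
      (Eglobal c ε φ₁ φ₂ μ ν (∑ i, w i • replaceCell (J i) (q i) π) = Eglobal c ε φ₁ φ₂ μ ν π →
        (∀ i, q i = (J i).domRestrict π) ∧ IsMinOn (Eglobal c ε φ₁ φ₂ μ ν) (Ici 0) π) := by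
  have hscore := strictConvexOn_score (c := c) hε hf₁ hf₂ hμ hν (le_refl 0)
  have hcell (i : ι) : replaceCell (J i) (q i) π ∈ cellPlans (J i) π :=
    replaceCell_mem_cellPlans hπ (hq i)
  have hcellmin (i : ι) :
      IsMinOn (score c ε f₁ f₂ μ ν 0) (cellPlans (J i) π) (replaceCell (J i) (q i) π) :=
    isMinOn_score_replaceCell <| (isMinOn_EJfun_iff hφ₁ hφ₂ (μ := fun j : J i ↦ μ j)
      (fun j ↦ hμ j) hν (outMarg_nonneg hπ) (hq i)).1 (hmin i)
  have hbar : 0 ≤ ∑ i, w i • replaceCell (J i) (q i) π :=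
    Finset.sum_nonneg fun i _ ↦ smul_nonneg (hw i).le (hcell i).1
  have hE (p : X → Y → ℝ) (hp : 0 ≤ p) : Eglobal c ε φ₁ φ₂ μ ν p = score c ε f₁ f₂ μ ν 0 p :=
    EJfun_eq_coe_score hφ₁ hφ₂ hμ hν le_rfl hp
  rw [hE _ hbar, hE _ hπ, EReal.coe_le_coe_iff, EReal.coe_eq_coe_iff]
  refine ⟨map_sum_smul_le_of_isMinOn hscore.convexOn (fun _ ↦ cellPlans_subset_Ici) hcell hcellmin
    (fun _ ↦ self_mem_cellPlans hπ) (fun i ↦ (hw i).le) hw₁, fun heq ↦ ?_⟩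
  have hfix : ∀ i, replaceCell (J i) (q i) π = π :=
    eq_of_le_map_sum_smul_of_isMinOn hscore (fun _ ↦ cellPlans_subset_Ici)
      (fun _ ↦ convex_cellPlans) hcell hcellmin (fun _ ↦ self_mem_cellPlans hπ) hw hw₁ heq.ge
  refine ⟨fun i ↦ domRestrict_replaceCell.symm.trans (congrArg _ (hfix i)),
    (isMinOn_EJfun_iff hφ₁ hφ₂ hμ hν le_rfl hπ).2 <|
      isMinOn_score_of_forall_cellPlans hε hf₁ hf₂ hf₁' hf₂' hμ hν hcover hdisj hπ fun i ↦ ?_⟩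
  simpa only [hfix i] using hcellmin i

end Update

/-- the averaged ("safe") parallel update
`π̄ = ∑_J [(1 − 1/|𝒥|)π_J + (1/|𝒥|)π̃_J]` does not increase the global score,
and if the score stays equal then every cell plan was already optimal and `π`
is the global minimizer of `E`. -/
theorem safe_parallel_update_decrement
    {X Y : Type*} [Fintype X] [Fintype Y] [Nonempty X] [Nonempty Y]
    (μ : X → ℝ) (ν : Y → ℝ) (hμ : ∀ x, 0 < μ x) (hν : ∀ y, 0 < ν y)
    (c : X → Y → ℝ) (ε : ℝ) (hε : 0 < ε)
    (φ₁ φ₂ : ℝ → EReal) (h₁ : AssumptionA φ₁) (h₂ : AssumptionA φ₂)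
    {n : ℕ} (hn : 0 < n) (Js : Fin n → Set X) (hJs : IsFinPartition Js)
    (π : X → Y → ℝ) (hπ : ∀ x y, 0 ≤ π x y)
    (hfin : Eglobal c ε φ₁ φ₂ μ ν π ≠ ⊤)
    (tπ : (i : Fin n) → ↥(Js i) → Y → ℝ)
    (htπnn : ∀ i, ∀ (j : Js i) (y : Y), 0 ≤ tπ i j y)
    (htπ : ∀ i, ∀ π' : ↥(Js i) → Y → ℝ, (∀ (j : Js i) (y : Y), 0 ≤ π' j y) →
      EJfun (fun (j : Js i) y => c j y) ε φ₁ φ₂ (fun (j : Js i) => μ j) ν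
          (outMarg (Js i) π) (tπ i)
        ≤ EJfun (fun (j : Js i) y => c j y) ε φ₁ φ₂ (fun (j : Js i) => μ j) ν
          (outMarg (Js i) π) π') :
    let πbar : X → Y → ℝ := fun x y =>
      (1 - 1 / (n : ℝ)) * π x y
        + (1 / (n : ℝ)) * ∑ i, (if h : x ∈ Js i then tπ i ⟨x, h⟩ y else 0)
    Eglobal c ε φ₁ φ₂ μ ν πbar ≤ Eglobal c ε φ₁ φ₂ μ ν π ∧
    (Eglobal c ε φ₁ φ₂ μ ν πbar = Eglobal c ε φ₁ φ₂ μ ν π →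
      (∀ i, ∀ (j : Js i) (y : Y), tπ i j y = π j y) ∧
      ∀ π' : X → Y → ℝ, (∀ x y, 0 ≤ π' x y) →
        Eglobal c ε φ₁ φ₂ μ ν π ≤ Eglobal c ε φ₁ φ₂ μ ν π') := by
  intro πbar
  have hbar : πbar = ∑ i, (1 / (n : ℝ)) • replaceCell (Js i) (tπ i) π :=
    average_eq_sum_smul_replaceCell hJs.2.1 hJs.2.2 (by simp [hn.ne'])
  have hmain := safe_parallel_update_decrement_general (w := fun _ ↦ 1 / (n : ℝ)) hμ hν hε
    (fun _ ↦ h₁.eq_coe_toReal) (fun _ ↦ h₂.eq_coe_toReal) h₁.convexOn_toReal_s10 h₂.convexOn_toReal_s10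
    h₁.differentiableOn_toReal h₂.differentiableOn_toReal hJs.2.1 hJs.2.2
    (fun _ ↦ one_div_pos.2 (Nat.cast_pos.2 hn)) (by simp [hn.ne']) hπ htπnn htπ
  rw [← hbar] at hmain
  exact hmain.imp_right fun h heq ↦ ⟨fun i ↦ congrFun₂ ((h heq).1 i), fun _ hπ' ↦ (h heq).2 hπ'⟩

end
end
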